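/- In the setting below, assume additionally that the closure of Per_H equals M and that δ ∈ (0, ν) is such that X_δ has finitely many maximal chains that are pairwise disjoint, each accumulating at x. Then for every p ∈ Per_H^{n−1} ∩ B_δ(x) there exists an open set V containing S_p such that Per_H ∩ V ∩ B_δ(x) ⊆ [p], where [p] denotes the maximal chain of X_δ containing p. -/

import Mathlib

open Metric Set

variable {M : Type*} [MetricSpace M]

/-- Iterates of a homeomorphism, indexed by `ℤ`. -/
def iterZ (f : M ≃ₜ M) (k : ℤ) (x : M) : M := (f.toEquiv ^ k) x

/-- `f` is expansive with expansivity constant `α`. -/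
def IsExpansive (f : M ≃ₜ M) (α : ℝ) : Prop :=
  ∀ x y : M, x ≠ y → ∃ k : ℤ, α < dist (iterZ f k x) (iterZ f k y)

/-- Stable set of `x`. -/
def Ws (f : M ≃ₜ M) (x : M) : Set M :=
  {y | Filter.Tendsto (fun k : ℤ => dist (iterZ f k x) (iterZ f k y)) Filter.atTop (nhds 0)}

/-- Unstable set of `x`. -/
def Wu (f : M ≃ₜ M) (x : M) : Set M :=
  {y | Filter.Tendsto (fun k : ℤ => dist (iterZ f k x) (iterZ f k y)) Filter.atBot (nhds 0)}

/-- Local (`ε`-local) stable set of `x`. -/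
def WsLoc (f : M ≃ₜ M) (ε : ℝ) (x : M) : Set M :=
  {y | ∀ k : ℤ, 0 ≤ k → dist (iterZ f k x) (iterZ f k y) ≤ ε}

/-- Local (`ε`-local) unstable set of `x`. -/
def WuLoc (f : M ≃ₜ M) (ε : ℝ) (x : M) : Set M :=
  {y | ∀ k : ℤ, k ≤ 0 → dist (iterZ f k x) (iterZ f k y) ≤ ε}

/-- The model space `ℝ^r × ℝ^{n-r}`. -/
abbrev ModelSp (n r : ℕ) := (Fin r → ℝ) × (Fin (n - r) → ℝ)

/-- The model hyperbolic linear map `L(a,b) = (a/2, 2b)`. -/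
noncomputable def modelL (n r : ℕ) : ModelSp n r → ModelSp n r :=
  fun q => (fun i => q.1 i / 2, fun i => 2 * q.2 i)

/-- Topologically hyperbolic periodic points of index `r` (`Per_H^r`). -/
def PerHr (f : M ≃ₜ M) (n r : ℕ) : Set M :=
  {p | ∃ l : ℕ, 1 ≤ l ∧ (f.toEquiv ^ l) p = p ∧
    ∃ (U : Set M) (V : Set (ModelSp n r)) (h : U ≃ₜ V),
      IsOpen U ∧ IsOpen V ∧ (0 : ModelSp n r) ∈ V ∧
      ∃ hp : p ∈ U, ((h ⟨p, hp⟩ : V) : ModelSp n r) = 0 ∧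
        ∀ z : M, ∀ hz : z ∈ U, ∀ hz' : (f.toEquiv ^ l) z ∈ U,
          ((h ⟨(f.toEquiv ^ l) z, hz'⟩ : V) : ModelSp n r) = modelL n r (h ⟨z, hz⟩)}

/-- All topologically hyperbolic periodic points (`Per_H`). -/
def PerH (f : M ≃ₜ M) (n : ℕ) : Set M := ⋃ r ∈ Finset.range (n + 1), PerHr f n r

/-- `p` admits a local product structure. -/
def AdmitsLPS (f : M ≃ₜ M) (n : ℕ) (p : M) : Prop :=
  ∃ (k : ℕ) (h : (Fin k → ℝ) × (Fin (n - k) → ℝ) → M) (ε : ℝ),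
    0 < ε ∧ Topology.IsEmbedding h ∧ p ∈ Set.range h ∧
    ∀ x : Fin k → ℝ, ∀ y : Fin (n - k) → ℝ,
      h '' ({x} ×ˢ univ) = WsLoc f ε (h (x, y)) ∩ Set.range h ∧
      h '' (univ ×ˢ {y}) = WuLoc f ε (h (x, y)) ∩ Set.range h

/-- `D` has exactly two connected components, namely `V₁` and `V₂`. -/
def TwoComponents {M : Type*} [TopologicalSpace M] (D V₁ V₂ : Set M) : Prop :=
  V₁ ≠ V₂ ∧
  (∀ y ∈ D, connectedComponentIn D y = V₁ ∨ connectedComponentIn D y = V₂) ∧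
  (∃ y ∈ D, connectedComponentIn D y = V₁) ∧ (∃ y ∈ D, connectedComponentIn D y = V₂)

variable {M : Type*} [MetricSpace M]

/-- `S_p = cc_p(W^s(p) ∩ B_ν(x))`. -/
def SpSet (f : M ≃ₜ M) (x : M) (ν : ℝ) (p : M) : Set M :=
  connectedComponentIn (Ws f p ∩ Metric.ball x ν) p

/-- `U_p = cc_p(W^u(p) ∩ B_ν(x))`. -/
def UpSet (f : M ≃ₜ M) (x : M) (ν : ℝ) (p : M) : Set M :=
  connectedComponentIn (Wu f p ∩ Metric.ball x ν) p

/-- `Ŝ_p = B_ν(x) \ cc_x(B_ν(x) \ S_p)`. -/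
def ShatSet (f : M ≃ₜ M) (x : M) (ν : ℝ) (p : M) : Set M :=
  Metric.ball x ν \ connectedComponentIn (Metric.ball x ν \ SpSet f x ν p) x

/-- `X_δ = Per_H^{n-1} ∩ B_δ(x)`. -/
def Xdelta (f : M ≃ₜ M) (n : ℕ) (x : M) (δ : ℝ) : Set M :=
  PerHr f n (n - 1) ∩ Metric.ball x δ

/-- `C` is a chain of `(X_δ, ≤)`, where `p ≤ q ↔ Ŝ_p ⊆ Ŝ_q`. -/
def IsChainIn (f : M ≃ₜ M) (n : ℕ) (x : M) (ν δ : ℝ) (C : Set M) : Prop :=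
  C ⊆ Xdelta f n x δ ∧
  ∀ p ∈ C, ∀ q ∈ C, ShatSet f x ν p ⊆ ShatSet f x ν q ∨ ShatSet f x ν q ⊆ ShatSet f x ν p

/-- `C` is a maximal chain of `(X_δ, ≤)`. -/
def IsMaxChainIn (f : M ≃ₜ M) (n : ℕ) (x : M) (ν δ : ℝ) (C : Set M) : Prop :=
  IsChainIn f n x ν δ C ∧ ∀ C' : Set M, IsChainIn f n x ν δ C' → C ⊆ C' → C' = C

/-- Vertices of the Kuhn simplex `(z, σ)` on the discrete torus. -/
def vtx {n N : ℕ} (z : Fin n → ZMod N) (σ : Equiv.Perm (Fin n)) (j : ℕ) : Fin n → ZMod N :=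
  fun x => z x + if (σ.symm x : ℕ) < j then 1 else 0

lemma vtx_swap {n N : ℕ} (z : Fin n → ZMod N) (σ : Equiv.Perm (Fin n)) (a b : Fin n)
    (hab : (a : ℕ) + 1 = b) (k : ℕ) (hk : k ≠ b) :
    vtx z (σ * Equiv.swap a b) k = vtx z σ k := by
  funext x
  have h : (σ * Equiv.swap a b).symm x = Equiv.swap a b (σ.symm x) := rfl
  simp only [vtx, h]
  congr 1
  by_cases h1 : σ.symm x = a
  · rw [h1, Equiv.swap_apply_left]
    have : ((b : ℕ) < k) ↔ ((a : ℕ) < k) := by omega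
    simp [this]
  · by_cases h2 : σ.symm x = b
    · rw [h2, Equiv.swap_apply_right]
      have : ((a : ℕ) < k) ↔ ((b : ℕ) < k) := by omega
      simp [this]
    · rw [Equiv.swap_apply_of_ne_of_ne h1 h2]

lemma sum_unused {n N : ℕ} [NeZero N] (t : Fin n → (Fin n → ZMod N) → ZMod 2)
    (κ : Fin n → ℕ) (a b : Fin n) (hab : (a : ℕ) + 1 = b) (hκ : ∀ i, κ i ≠ b) :
    ∑ zs : (Fin n → ZMod N) × Equiv.Perm (Fin n), ∏ i, t i (vtx zs.1 zs.2 (κ i)) = 0 := by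
  refine Finset.sum_involution (fun zs _ => (zs.1, zs.2 * Equiv.swap a b)) ?_ ?_ ?_ ?_
  · intro zs _
    have : ∀ i, vtx zs.1 (zs.2 * Equiv.swap a b) (κ i) = vtx zs.1 zs.2 (κ i) :=
      fun i => vtx_swap _ _ a b hab _ (hκ i)
    simp only [this]
    exact CharTwo.add_self_eq_zero _
  · intro zs _ _ h
    have h2 : zs.2 * Equiv.swap a b = zs.2 := congrArg Prod.snd h
    have h3 : Equiv.swap a b = 1 := by simpa using h2
    have h4 : Equiv.swap a b a = a := by rw [h3]; rfl
    rw [Equiv.swap_apply_left] at h4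
    rw [h4] at hab; omega
  · intro zs _; exact Finset.mem_univ _
  · intro zs _
    simp [mul_assoc]

lemma vtx_rot {m N : ℕ} (z : Fin (m + 1) → ZMod N) (σ : Equiv.Perm (Fin (m + 1))) (k : ℕ)
    (hk : k ≤ m) :
    vtx (vtx z σ 1) (σ * finRotate (m + 1)) k = vtx z σ (k + 1) := by
  funext x
  have h : (σ * finRotate (m + 1)).symm x = (finRotate (m + 1)).symm (σ.symm x) := rfl
  simp only [vtx, h]
  obtain ⟨y, hy⟩ := (finRotate (m + 1)).surjective (σ.symm x)
  rw [← hy, Equiv.symm_apply_apply, add_assoc]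
  congr 1
  by_cases hl : y = Fin.last m
  · subst hl
    rw [finRotate_last]
    simp
    omega
  · have h1 : ((finRotate (m + 1) y : Fin (m + 1)) : ℕ) = y + 1 := coe_finRotate_of_ne_last hl
    rw [h1]
    simp

lemma sum_rot {m N : ℕ} [NeZero N] (t : Fin (m + 1) → (Fin (m + 1) → ZMod N) → ZMod 2)
    (κ : Fin (m + 1) → ℕ) (hκ : ∀ i, κ i ≤ m) :
    ∑ zs : (Fin (m + 1) → ZMod N) × Equiv.Perm (Fin (m + 1)),
        ∏ i, t i (vtx zs.1 zs.2 (κ i + 1)) =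
    ∑ zs : (Fin (m + 1) → ZMod N) × Equiv.Perm (Fin (m + 1)),
        ∏ i, t i (vtx zs.1 zs.2 (κ i)) := by
  refine Fintype.sum_bijective
    (fun zs => (vtx zs.1 zs.2 1, zs.2 * finRotate (m + 1))) ?_ _ _ ?_
  · rw [Fintype.bijective_iff_injective_and_card]
    refine ⟨?_, rfl⟩
    rintro ⟨z, σ⟩ ⟨z', σ'⟩ h
    simp only [Prod.mk.injEq, mul_left_inj] at h
    obtain ⟨h1, h2⟩ := h
    subst h2
    simp only [Prod.mk.injEq, and_true]
    funext x
    have := congrFun h1 x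
    simpa [vtx] using this
  · intro zs
    simp only [vtx_rot _ _ _ (hκ _)]

theorem parity {m N : ℕ} [NeZero N] (t : Fin (m + 1) → (Fin (m + 1) → ZMod N) → ZMod 2) :
    ∑ zs : (Fin (m + 1) → ZMod N) × Equiv.Perm (Fin (m + 1)),
      ∏ i, (t i (vtx zs.1 zs.2 (i + 1)) + t i (vtx zs.1 zs.2 i)) = 0 := by
  classical
  simp only [Finset.prod_add]
  rw [Finset.sum_comm]
  set Q : Finset (Fin (m + 1)) → ZMod 2 := fun S =>
    ∑ zs : (Fin (m + 1) → ZMod N) × Equiv.Perm (Fin (m + 1)),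
      ∏ i, t i (vtx zs.1 zs.2 (if i ∈ S then (i : ℕ) + 1 else i)) with hQ
  have e : ∀ S : Finset (Fin (m + 1)),
      (∑ zs : (Fin (m + 1) → ZMod N) × Equiv.Perm (Fin (m + 1)),
        (∏ a ∈ S, t a (vtx zs.1 zs.2 (a + 1))) *
          ∏ a ∈ Finset.univ \ S, t a (vtx zs.1 zs.2 a)) = Q S := by
    intro S
    refine Finset.sum_congr rfl fun zs _ => ?_
    rw [← Finset.prod_sdiff (Finset.subset_univ S), mul_comm]
    congr 1
    · refine Finset.prod_congr rfl fun i hi => ?_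
      rw [if_neg (Finset.mem_sdiff.1 hi).2]
    · refine Finset.prod_congr rfl fun i hi => ?_
      rw [if_pos hi]
  simp only [e]
  have hz : ∀ S : Finset (Fin (m + 1)), S ≠ ∅ → S ≠ Finset.univ → Q S = 0 := by
    intro S h0 h1
    by_cases hgap : ∃ a b : Fin (m + 1), (a : ℕ) + 1 = b ∧ a ∉ S ∧ b ∈ S
    · obtain ⟨a, b, hab, ha, hb⟩ := hgap
      refine sum_unused t _ a b hab fun i => ?_
      split_ifs with hi
      · intro h
        have : i = a := Fin.ext (by omega)
        exact ha (this ▸ hi)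
      · intro h
        have : i = b := Fin.ext h
        exact hi (this ▸ hb)
    · push Not at hgap
      have h0S : (0 : Fin (m + 1)) ∈ S := by
        by_contra h
        apply h0
        have : ∀ k : ℕ, ∀ hk : k < m + 1, (⟨k, hk⟩ : Fin (m + 1)) ∉ S := by
          intro k
          induction k with
          | zero => intro hk; exact h
          | succ k ih => intro hk; exact hgap ⟨k, by omega⟩ ⟨k + 1, hk⟩ rfl (ih _)
        exact Finset.eq_empty_of_forall_notMem fun i => this i i.2
      have hl : Fin.last m ∉ S := by
        intro h
        apply h1
        have : ∀ k : ℕ, ∀ hk : k ≤ m, (⟨m - k, by omega⟩ : Fin (m + 1)) ∈ S := by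
          intro k
          induction k with
          | zero => intro hk; exact h
          | succ k ih =>
            intro hk
            by_contra h'
            exact hgap ⟨m - (k + 1), by omega⟩ ⟨m - k, by omega⟩ (by simp; omega) h'
              (ih (by omega))
        refine Finset.eq_univ_of_forall fun i => ?_
        have := this (m - i) (by omega)
        convert this using 1
        apply Fin.ext; simp; omega
      have hm : 0 < m := by
        rcases Nat.eq_zero_or_pos m with h | h
        · subst h; exact absurd h0S hl
        · exact h
      have hk : ∀ i : Fin (m + 1), (if i ∈ S then (i : ℕ) + 1 else i) =
          (if i ∈ S then (i : ℕ) else i - 1) + 1 := by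
        intro i
        split_ifs with hi
        · rfl
        · have : i ≠ 0 := fun h => hi (h ▸ h0S)
          have : (i : ℕ) ≠ 0 := fun h => this (Fin.ext h)
          omega
      have hlt : ∀ i : Fin (m + 1), (if i ∈ S then (i : ℕ) else i - 1) < m := by
        intro i
        split_ifs with hi
        · have : i ≠ Fin.last m := fun h => hl (h ▸ hi)
          have : (i : ℕ) ≠ m := fun h => this (Fin.ext h)
          omega
        · omega
      simp only [hQ, hk]
      rw [sum_rot t (fun i => if i ∈ S then (i : ℕ) else i - 1) fun i => (hlt i).le]
      exact sum_unused t _ ⟨m - 1, by omega⟩ (Fin.last m) (by simp; omega)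
        fun i => by have := hlt i; simp only [Fin.val_last]; omega
  have hu : Q Finset.univ = Q ∅ := by
    simp only [hQ, Finset.mem_univ, if_true, Finset.notMem_empty, if_false]
    exact sum_rot t (fun i => (i : ℕ)) fun i => by omega
  have hne : (∅ : Finset (Fin (m + 1))) ≠ Finset.univ :=
    (Finset.univ_nonempty).ne_empty.symm
  rw [Finset.powerset_univ]
  rw [← Finset.sum_subset (Finset.subset_univ {∅, Finset.univ})]
  · rw [Finset.sum_pair hne, hu]
    exact CharTwo.add_self_eq_zero _
  · intro S _ hS
    simp only [Finset.mem_insert, Finset.mem_singleton, not_or] at hS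
    exact hz S hS.1 hS.2

/-- Kuhn-type degree comparison. -/
theorem degree_compare {n : ℕ} (F₁ F₂ : (Fin n → ℝ) → (Fin n → ℝ))
    (h₁ : Continuous F₁) (h₂ : Continuous F₂) (Ω : Set (Fin n → ℝ))
    (hb : Bornology.IsBounded Ω) (ρ : ℝ) (hρ : 0 < ρ) (hρΩ : ball 0 ρ ⊆ Ω)
    (hid : ∀ z ∈ ball (0 : Fin n → ℝ) ρ, F₁ z = z)
    (hz : ∀ z ∈ closure Ω, F₁ z = 0 → z = 0)
    (hnz : ∀ z ∈ closure Ω, F₂ z ≠ 0)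
    (heq : ∀ z, z ∉ Ω → F₁ z = F₂ z) : False := by
  rcases n with _ | m
  · exact hnz 0 (subset_closure (hρΩ (mem_ball_self hρ))) (Subsingleton.elim _ _)
  have hcpt : IsCompact (closure Ω) := hb.isCompact_closure
  -- lower bounds
  obtain ⟨c₂, hc₂, hF₂⟩ : ∃ c > 0, ∀ z ∈ closure Ω, c ≤ ‖F₂ z‖ := by
    rcases (closure Ω).eq_empty_or_nonempty with h | h
    · exact ⟨1, one_pos, by simp [h]⟩
    · obtain ⟨z, hz, hm⟩ := hcpt.exists_isMinOn h h₂.norm.continuousOn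
      exact ⟨‖F₂ z‖, norm_pos_iff.2 (hnz z hz), fun w hw => hm hw⟩
  obtain ⟨c₁, hc₁, hF₁⟩ : ∃ c > 0, ∀ z ∈ closure Ω \ ball 0 (ρ / 2), c ≤ ‖F₁ z‖ := by
    rcases (closure Ω \ ball 0 (ρ / 2)).eq_empty_or_nonempty with h | h
    · exact ⟨1, one_pos, by simp [h]⟩
    · obtain ⟨z, hz', hm⟩ := (hcpt.diff isOpen_ball).exists_isMinOn h h₁.norm.continuousOn
      refine ⟨‖F₁ z‖, norm_pos_iff.2 fun h0 => ?_, fun w hw => hm hw⟩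
      have := hz z hz'.1 h0
      exact hz'.2 (by rw [this]; exact mem_ball_self (by positivity))
  obtain ⟨R, hR⟩ := hb.subset_closedBall (0 : Fin (m + 1) → ℝ)
  -- uniform continuity near the domain
  have hcb : IsCompact (closedBall (0 : Fin (m + 1) → ℝ) (R + 1)) := isCompact_closedBall _ _
  obtain ⟨d₁, hd₁, hu₁⟩ := Metric.uniformContinuousOn_iff.1
    (hcb.uniformContinuousOn_of_continuous h₁.continuousOn) c₁ hc₁
  obtain ⟨d₂, hd₂, hu₂⟩ := Metric.uniformContinuousOn_iff.1
    (hcb.uniformContinuousOn_of_continuous h₂.continuousOn) c₂ hc₂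
  obtain ⟨h, hh, hhd₁, hhd₂, hh1, hhρ⟩ : ∃ h : ℝ, 0 < h ∧ h < d₁ ∧ h < d₂ ∧ h < 1 ∧ h < ρ / 2 := by
    have : 0 < min (min d₁ d₂) (min 1 (ρ / 2)) := by positivity
    refine ⟨min (min d₁ d₂) (min 1 (ρ / 2)) / 2, by positivity, ?_, ?_, ?_, ?_⟩
    · have := min_le_left (min d₁ d₂) (min 1 (ρ / 2)); have := min_le_left d₁ d₂; linarith
    · have := min_le_left (min d₁ d₂) (min 1 (ρ / 2)); have := min_le_right d₁ d₂; linarith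
    · have := min_le_right (min d₁ d₂) (min 1 (ρ / 2)); have := min_le_left 1 (ρ / 2); linarith
    · have := min_le_right (min d₁ d₂) (min 1 (ρ / 2)); have := min_le_right 1 (ρ / 2); linarith
  obtain ⟨K, hK⟩ := exists_nat_gt (R / h + 3)
  have hR0 : 0 ≤ R := by
    have := hR (hρΩ (mem_ball_self hρ)); simpa using this
  have hK3 : 3 < K := by
    have : (0 : ℝ) ≤ R / h := by positivity
    have : (3 : ℝ) < K := by linarith
    exact_mod_cast this
  have hRK : R < (K - 3) * h := by
    have : R / h < K - 3 := by linarith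
    rwa [div_lt_iff₀ hh] at this
  set N : ℕ := 2 * K + 2 with hN
  have : NeZero N := ⟨by omega⟩
  let pt : (Fin (m + 1) → ZMod N) → (Fin (m + 1) → ℝ) := fun w x => (((w x).val : ℝ) - K) * h
  let s : ((Fin (m + 1) → ℝ) → (Fin (m + 1) → ℝ)) → Fin (m + 1) → (Fin (m + 1) → ZMod N) → ZMod 2 :=
    fun F i w => if F (pt w) i < 0 then 1 else 0
  let term : ((Fin (m + 1) → ℝ) → (Fin (m + 1) → ℝ)) →
      (Fin (m + 1) → ZMod N) × Equiv.Perm (Fin (m + 1)) → ZMod 2 := fun F zs =>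
    ∏ i : Fin (m + 1), (s F i (vtx zs.1 zs.2 (i + 1)) + s F i (vtx zs.1 zs.2 i))
  have hp : ∀ F, ∑ zs, term F zs = 0 := fun F => parity (s F)
  -- sizes
  have hval : ∀ zs : (Fin (m + 1) → ZMod N) × Equiv.Perm (Fin (m + 1)), ∀ j : ℕ,
      pt (vtx zs.1 zs.2 j) ∈ Ω → ∀ x, 1 ≤ (zs.1 x).val ∧ (zs.1 x).val + 2 < N := by
    intro zs j hj x
    have h1 := hR hj
    rw [mem_closedBall_zero_iff, pi_norm_le_iff_of_nonneg hR0] at h1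
    have h2 := h1 x
    rw [Real.norm_eq_abs, abs_mul, abs_of_pos hh] at h2
    have h3 : |((vtx zs.1 zs.2 j x).val : ℝ) - K| < K - 3 := by
      by_contra h'; push Not at h'
      have := mul_le_mul_of_nonneg_right h' hh.le; linarith
    rw [abs_lt] at h3
    have h4 : (3 : ℝ) < ((vtx zs.1 zs.2 j x).val : ℝ) := by linarith
    have h5 : ((vtx zs.1 zs.2 j x).val : ℝ) < ((2 * K - 3 : ℕ) : ℝ) := by
      push_cast [Nat.cast_sub (show 3 ≤ 2 * K by omega)]; linarith
    have h4' : 3 < (vtx zs.1 zs.2 j x).val := by exact_mod_cast h4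
    have h5' : (vtx zs.1 zs.2 j x).val < 2 * K - 3 := by exact_mod_cast h5
    by_cases hc : (zs.2.symm x : ℕ) < j
    · have hv : vtx zs.1 zs.2 j x = zs.1 x + 1 := by simp [vtx, hc]
      rw [hv] at h4' h5'
      by_cases hlt : (zs.1 x).val + 1 < N
      · have : (zs.1 x + 1).val = (zs.1 x).val + 1 := by
          rw [ZMod.val_add_of_lt] <;> rw [ZMod.val_one'' (by omega)]
          exact hlt
        omega
      · have hlt' := ZMod.val_lt (zs.1 x)
        have : (zs.1 x + 1).val = 0 := by
          have e : (zs.1 x) + 1 = (((zs.1 x).val + 1 : ℕ) : ZMod N) := by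
            push_cast; rw [ZMod.natCast_zmod_val]
          have e2 : (zs.1 x).val + 1 = N := by omega
          rw [e, e2]; simp
        omega
    · have hv : vtx zs.1 zs.2 j x = zs.1 x := by simp [vtx, hc]
      rw [hv] at h4' h5'
      omega
  have hptv : ∀ zs : (Fin (m + 1) → ZMod N) × Equiv.Perm (Fin (m + 1)),
      (∀ x, (zs.1 x).val + 2 < N) → ∀ k x,
      pt (vtx zs.1 zs.2 k) x =
        (((zs.1 x).val : ℝ) + (if (zs.2.symm x : ℕ) < k then 1 else 0) - K) * h := by
    intro zs hs k x
    simp only [pt, vtx]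
    split_ifs
    · have : (zs.1 x + 1).val = (zs.1 x).val + 1 := by
        rw [ZMod.val_add_of_lt] <;> rw [ZMod.val_one'' (by omega)]
        have := hs x; omega
      rw [this]; push_cast; ring
    · simp
  have hclose : ∀ zs : (Fin (m + 1) → ZMod N) × Equiv.Perm (Fin (m + 1)),
      (∀ x, (zs.1 x).val + 2 < N) → ∀ k l,
      dist (pt (vtx zs.1 zs.2 k)) (pt (vtx zs.1 zs.2 l)) ≤ h := by
    intro zs hs k l
    rw [dist_pi_le_iff hh.le]
    intro x
    rw [hptv zs hs, hptv zs hs, Real.dist_eq, abs_le]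
    split_ifs <;> constructor <;> nlinarith
  -- nonzero term forces small values
  have hsmall : ∀ F : (Fin (m + 1) → ℝ) → (Fin (m + 1) → ℝ), ∀ c d : ℝ, 0 < c → h < d →
      (∀ a ∈ closedBall (0 : Fin (m + 1) → ℝ) (R + 1),
        ∀ b ∈ closedBall (0 : Fin (m + 1) → ℝ) (R + 1), dist a b < d → dist (F a) (F b) < c) →
      ∀ zs : (Fin (m + 1) → ZMod N) × Equiv.Perm (Fin (m + 1)), ∀ j : ℕ,
      pt (vtx zs.1 zs.2 j) ∈ Ω → term F zs ≠ 0 → ‖F (pt (vtx zs.1 zs.2 j))‖ < c := by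
    intro F c d hc hd hu zs j hj ht
    have hs := fun x => (hval zs j hj x).2
    rw [pi_norm_lt_iff hc]
    intro i
    have hin : ∀ k, pt (vtx zs.1 zs.2 k) ∈ closedBall (0 : Fin (m + 1) → ℝ) (R + 1) := by
      intro k
      have h1 := hclose zs hs k j
      have h2 := hR hj
      rw [mem_closedBall] at h2 ⊢
      have := dist_triangle (pt (vtx zs.1 zs.2 k)) (pt (vtx zs.1 zs.2 j)) 0
      linarith
    have hd' : ∀ k, |F (pt (vtx zs.1 zs.2 j)) i - F (pt (vtx zs.1 zs.2 k)) i| < c := by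
      intro k
      have h1 := hu _ (hin j) _ (hin k) (lt_of_le_of_lt (hclose zs hs j k) hd)
      have h2 := dist_le_pi_dist (F (pt (vtx zs.1 zs.2 j))) (F (pt (vtx zs.1 zs.2 k))) i
      rw [Real.dist_eq] at h2
      linarith
    have hi := Finset.prod_ne_zero_iff.1 ht i (Finset.mem_univ _)
    have e1 := abs_lt.1 (hd' (i + 1))
    have e2 := abs_lt.1 (hd' i)
    rw [Real.norm_eq_abs, abs_lt]
    simp only [s] at hi
    split_ifs at hi with a b b
    · exact absurd (by decide) hi
    · constructor <;> linarith
    · constructor <;> linarith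
    · exact absurd (by decide) hi
  -- the distinguished simplex
  let z0 : (Fin (m + 1) → ZMod N) × Equiv.Perm (Fin (m + 1)) := (fun _ => ((K - 1 : ℕ) : ZMod N), 1)
  have hz0 : ∀ x, (z0.1 x).val = K - 1 := by
    intro x
    exact ZMod.val_cast_of_lt (by omega)
  have hKc : ((K - 1 : ℕ) : ℝ) = K - 1 := by
    rw [Nat.cast_sub (by omega)]; simp
  have hz0s : ∀ x, (z0.1 x).val + 2 < N := by intro x; rw [hz0]; omega
  have hz0b : ∀ k, pt (vtx z0.1 z0.2 k) ∈ ball (0 : Fin (m + 1) → ℝ) ρ := by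
    intro k
    rw [mem_ball_zero_iff, pi_norm_lt_iff hρ]
    intro x
    rw [hptv z0 hz0s, hz0, Real.norm_eq_abs, abs_lt, hKc]
    split_ifs <;> constructor <;> nlinarith
  have hz0t : term F₁ z0 = 1 := by
    refine Finset.prod_eq_one fun i _ => ?_
    simp only [s]
    rw [hid _ (hz0b _), hid _ (hz0b _), hptv z0 hz0s, hptv z0 hz0s, hz0, hKc]
    have e : (z0.2.symm i : ℕ) = i := rfl
    rw [e, if_pos (show (i : ℕ) < i + 1 by omega), if_neg (show ¬ (i : ℕ) < i by omega)]
    rw [if_neg, if_pos]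
    · simp
    · nlinarith
    · nlinarith
  have hsum : ∀ zs, term F₁ zs + term F₂ zs = if zs = z0 then 1 else 0 := by
    intro zs
    by_cases hv : ∃ j : ℕ, pt (vtx zs.1 zs.2 j) ∈ Ω
    · obtain ⟨j, hj⟩ := hv
      have ht2 : term F₂ zs = 0 := by
        by_contra ht
        have := hsmall F₂ c₂ d₂ hc₂ hhd₂ hu₂ zs j hj ht
        have := hF₂ _ (subset_closure hj)
        linarith
      rw [ht2, add_zero]
      split_ifs with he
      · rw [he, hz0t]
      · by_contra ht
        apply he
        have hs1 := hsmall F₁ c₁ d₁ hc₁ hhd₁ hu₁ zs j hj ht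
        have hs := fun x => (hval zs j hj x).2
        have hjb : pt (vtx zs.1 zs.2 j) ∈ ball (0 : Fin (m + 1) → ℝ) (ρ / 2) := by
          by_contra hn
          have := hF₁ _ ⟨subset_closure hj, hn⟩
          linarith
        have hall : ∀ k, pt (vtx zs.1 zs.2 k) ∈ ball (0 : Fin (m + 1) → ℝ) ρ := by
          intro k
          have h1 := hclose zs hs k j
          rw [mem_ball] at hjb ⊢
          have := dist_triangle (pt (vtx zs.1 zs.2 k)) (pt (vtx zs.1 zs.2 j)) 0
          linarith
        have key : ∀ i, zs.2.symm i = i ∧ (zs.1 i).val = K - 1 := by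
          intro i
          have hi := Finset.prod_ne_zero_iff.1 ht i (Finset.mem_univ _)
          simp only [s] at hi
          rw [hid _ (hall _), hid _ (hall _), hptv zs hs, hptv zs hs] at hi
          by_cases hsi : zs.2.symm i = i
          · refine ⟨hsi, ?_⟩
            rw [hsi, if_pos (show (i : ℕ) < i + 1 by omega),
              if_neg (show ¬ (i : ℕ) < i by omega)] at hi
            split_ifs at hi with a b b
            · exact absurd (by decide) hi
            · exfalso; nlinarith
            · have a' : ((K : ℕ) : ℝ) ≤ (((zs.1 i).val + 1 : ℕ) : ℝ) := by
                push_cast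
                by_contra hcon; push Not at hcon; apply a; nlinarith
              have b' : ((zs.1 i).val : ℝ) < ((K : ℕ) : ℝ) := by
                by_contra hcon; push Not at hcon
                have : 0 ≤ (((zs.1 i).val : ℝ) + 0 - K) * h := mul_nonneg (by linarith) hh.le
                linarith
              have a'' : K ≤ (zs.1 i).val + 1 := by exact_mod_cast a'
              have b'' : (zs.1 i).val < K := by exact_mod_cast b'
              omega
            · exact absurd (by decide) hi
          · exfalso
            apply hi
            have hsi' : (zs.2.symm i : ℕ) ≠ i := fun h => hsi (Fin.ext h)
            have : ((zs.2.symm i : ℕ) < i + 1) ↔ ((zs.2.symm i : ℕ) < i) := by omega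
            simp only [this]
            exact CharTwo.add_self_eq_zero _
        refine Prod.ext ?_ ?_
        · funext x
          apply ZMod.val_injective
          rw [(key x).2, hz0]
        · refine Equiv.ext fun x => ?_
          have := (key x).1
          rw [Equiv.symm_apply_eq] at this
          exact this.symm
    · push Not at hv
      rw [if_neg]
      · have : term F₁ zs = term F₂ zs := by
          simp only [term, s, heq _ (hv _)]
        rw [this]
        exact CharTwo.add_self_eq_zero _
      · rintro rfl
        exact hv 0 (hρΩ (hz0b 0))
  have h1 : ∑ zs, (term F₁ zs + term F₂ zs) = 1 := by
    simp only [hsum]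
    simp
  rw [Finset.sum_add_distrib, hp, hp] at h1
  simp at h1

theorem degree_compare_fd {X : Type*} [NormedAddCommGroup X] [NormedSpace ℝ X]
    [FiniteDimensional ℝ X] (F₁ F₂ : X → X)
    (h₁ : Continuous F₁) (h₂ : Continuous F₂) (Ω : Set X)
    (hb : Bornology.IsBounded Ω) (hΩ : Ω ∈ nhds (0 : X))
    (hid : ∀ᶠ z in nhds (0 : X), F₁ z = z)
    (hz : ∀ z ∈ closure Ω, F₁ z = 0 → z = 0)
    (hnz : ∀ z ∈ closure Ω, F₂ z ≠ 0)
    (heq : ∀ z, z ∉ Ω → F₁ z = F₂ z) : False := by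
  have e : X ≃L[ℝ] (Fin (Module.finrank ℝ X) → ℝ) :=
    ContinuousLinearEquiv.ofFinrankEq (by simp)
  have hcl : closure (e.symm ⁻¹' Ω) = e.symm ⁻¹' closure Ω :=
    (e.symm.toHomeomorph.preimage_closure Ω).symm
  have hev : ∀ᶠ z in nhds (0 : X), z ∈ Ω ∧ F₁ z = z := (Filter.eventually_mem_set.2 hΩ).and hid
  have hev2 : ∀ᶠ w in nhds (0 : Fin (Module.finrank ℝ X) → ℝ),
      e.symm w ∈ Ω ∧ F₁ (e.symm w) = e.symm w := by
    have : Filter.Tendsto e.symm (nhds 0) (nhds 0) := by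
      simpa using e.symm.continuous.tendsto 0
    exact this.eventually hev
  obtain ⟨ρ, hρ, hball⟩ := Metric.eventually_nhds_iff_ball.1 hev2
  refine degree_compare (fun w => e (F₁ (e.symm w))) (fun w => e (F₂ (e.symm w)))
    (by fun_prop) (by fun_prop) (e.symm ⁻¹' Ω) ?_ ρ hρ ?_ ?_ ?_ ?_ ?_
  · have : e.symm ⁻¹' Ω = e '' Ω := (e.image_eq_preimage_symm Ω).symm
    rw [this]
    exact e.lipschitz.isBounded_image hb
  · intro w hw
    exact (hball w hw).1
  · intro w hw
    simp [(hball w hw).2]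
  · intro w hw h0
    rw [hcl] at hw
    have h := hz _ hw (by simpa using h0)
    simpa using h
  · intro w hw h0
    rw [hcl] at hw
    exact hnz _ hw (by simpa using h0)
  · intro w hw
    simp only [mem_preimage] at hw
    simp [heq _ hw]

/-- radial retraction -/
noncomputable def radial {Y : Type*} [NormedAddCommGroup Y] [NormedSpace ℝ Y] (c : ℝ) (y : Y) : Y :=
  (c / max c ‖y‖) • y

section radial
variable {Y : Type*} [NormedAddCommGroup Y] [NormedSpace ℝ Y] {c : ℝ}

theorem radial_continuous (hc : 0 < c) : Continuous (radial c : Y → Y) := by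
  unfold radial
  refine Continuous.smul (Continuous.div continuous_const (by fun_prop) ?_) continuous_id
  intro y
  exact (lt_of_lt_of_le hc (le_max_left _ _)).ne'

theorem radial_mem (hc : 0 < c) (y : Y) : radial c y ∈ closedBall (0 : Y) c := by
  have hm : 0 < max c ‖y‖ := lt_of_lt_of_le hc (le_max_left _ _)
  rw [mem_closedBall_zero_iff, radial, norm_smul, Real.norm_of_nonneg (by positivity),
    div_mul_eq_mul_div, div_le_iff₀ hm]
  exact mul_le_mul_of_nonneg_left (le_max_right _ _) hc.le

theorem radial_eq_zero (hc : 0 < c) {y : Y} (h : radial c y = 0) : y = 0 := by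
  have hm : 0 < max c ‖y‖ := lt_of_lt_of_le hc (le_max_left _ _)
  rw [radial, smul_eq_zero] at h
  exact h.resolve_left (by positivity)

theorem radial_of_le (hc : 0 < c) {y : Y} (h : ‖y‖ ≤ c) : radial c y = y := by
  rw [radial, max_eq_left h, div_self hc.ne', one_smul]
end radial

theorem deg_lemma {X Y : Type*} [NormedAddCommGroup X] [NormedSpace ℝ X]
    [FiniteDimensional ℝ X] [NormedAddCommGroup Y] [NormedSpace ℝ Y]
    (H : OpenPartialHomeomorph X Y) (hH0 : (0 : X) ∈ H.source) (hH : H 0 = 0)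
    (Ω : Set X) (hb : Bornology.IsBounded Ω) (hΩ : Ω ∈ nhds (0 : X))
    (g₀ g₁ : X → Y) (hg₀ : ContinuousOn g₀ (closure Ω)) (hg₁ : ContinuousOn g₁ (closure Ω))
    (hloc : ∀ᶠ z in nhds (0 : X), g₀ z = H z)
    (hz : ∀ z ∈ closure Ω, g₀ z = 0 → z = 0)
    (hnz : ∀ z ∈ closure Ω, g₁ z ≠ 0)
    (heq : ∀ z ∈ frontier Ω, g₀ z = g₁ z) : False := by
  have hcpt : IsCompact (closure Ω) := hb.isCompact_closure
  have hev : ∀ᶠ z in nhds (0 : X), z ∈ H.source ∧ g₀ z = H z :=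
    (H.open_source.eventually_mem hH0).and hloc
  obtain ⟨d, hd, hball⟩ := Metric.eventually_nhds_iff_ball.1 hev
  -- lower bound for g₀ off the ball
  obtain ⟨c₀, hc₀, hlow₀⟩ : ∃ c > 0, ∀ z ∈ closure Ω, z ∉ ball (0 : X) d → c ≤ ‖g₀ z‖ := by
    have hK : IsCompact (closure Ω \ ball (0 : X) d) := hcpt.diff isOpen_ball
    rcases (closure Ω \ ball (0 : X) d).eq_empty_or_nonempty with h | h
    · refine ⟨1, one_pos, fun z hz hz' => ?_⟩
      have : z ∈ closure Ω \ ball (0 : X) d := ⟨hz, hz'⟩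
      rw [h] at this
      exact this.elim
    · obtain ⟨z₀, hz₀, hmin⟩ := hK.exists_isMinOn h (hg₀.norm.mono sdiff_subset)
      refine ⟨‖g₀ z₀‖, ?_, fun z hz hz' => hmin ⟨hz, hz'⟩⟩
      rw [gt_iff_lt, norm_pos_iff]
      intro h0
      have := hz _ hz₀.1 h0
      exact hz₀.2 (by rw [this]; exact mem_ball_self hd)
  -- image of the ball
  have himg : H '' (ball 0 d) ∈ nhds (0 : Y) := by
    have := H.image_mem_nhds hH0 (ball_mem_nhds (0 : X) hd)
    rwa [hH] at this
  obtain ⟨c₁, hc₁, hsub⟩ := Metric.nhds_basis_closedBall.mem_iff.1 himg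
  set c := min c₀ c₁ with hcdef
  have hc : 0 < c := lt_min hc₀ hc₁
  have hsub' : closedBall (0 : Y) c ⊆ H '' (ball 0 d) :=
    (closedBall_subset_closedBall (min_le_right _ _)).trans hsub
  have htar : closedBall (0 : Y) c ⊆ H.target := by
    intro y hy
    obtain ⟨z, hz, rfl⟩ := hsub' hy
    exact H.map_source (hball z hz).1
  have hsymm0 : H.symm 0 = 0 := by rw [← hH, H.left_inv hH0]
  have hsymm : ∀ y : Y, H.symm (radial c y) = 0 → y = 0 := by
    intro y hy
    have h1 := H.right_inv (htar (radial_mem hc y))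
    rw [hy, hH] at h1
    exact radial_eq_zero hc h1.symm
  have hκc : ∀ g : X → Y, ContinuousOn g (closure Ω) →
      ContinuousOn (fun z => H.symm (radial c (g z))) (closure Ω) := by
    intro g hg
    refine H.continuousOn_symm.comp ((radial_continuous hc).comp_continuousOn hg) ?_
    intro z _
    exact htar (radial_mem hc _)
  have hext : ∀ g : X → Y, ContinuousOn g (closure Ω) →
      ∃ F : X → X, Continuous F ∧ ∀ z ∈ closure Ω, F z = H.symm (radial c (g z)) := by
    intro g hg
    have hr : Continuous ((closure Ω).domRestrict (fun z => H.symm (radial c (g z)))) :=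
      continuousOn_iff_continuous_domRestrict.1 (hκc g hg)
    obtain ⟨F, hF⟩ := ContinuousMap.exists_restrict_eq (Y := X) (isClosed_closure (s := Ω))
      ⟨_, hr⟩
    refine ⟨F, F.continuous, fun z hz => ?_⟩
    exact congrArg (fun G => G ⟨z, hz⟩) hF
  obtain ⟨F₁, hF₁c, hF₁⟩ := hext g₀ hg₀
  obtain ⟨F₂, hF₂c, hF₂⟩ := hext g₁ hg₁
  classical
  have hfr : ∀ z ∈ frontier Ω, F₂ z = F₁ z := by
    intro z hz
    have hzc := frontier_subset_closure hz
    rw [hF₁ z hzc, hF₂ z hzc, heq z hz]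
  refine degree_compare_fd F₁ (Ω.piecewise F₂ F₁) hF₁c (hF₂c.piecewise hfr hF₁c) Ω hb hΩ
    ?_ ?_ ?_ ?_
  · have hg0 : ContinuousAt g₀ 0 := hg₀.continuousAt (Filter.mem_of_superset hΩ subset_closure)
    have hg00 : g₀ 0 = 0 := by rw [(hball 0 (mem_ball_self hd)).2, hH]
    have h3 : ∀ᶠ z in nhds (0 : X), ‖g₀ z‖ ≤ c := by
      have : Filter.Tendsto (fun z => ‖g₀ z‖) (nhds 0) (nhds 0) := by
        simpa [hg00] using hg0.norm.tendsto
      exact (this.eventually (gt_mem_nhds hc)).mono fun z hz => hz.le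
    filter_upwards [hev, hΩ, h3] with z hz hzΩ hzc
    rw [hF₁ z (subset_closure hzΩ), radial_of_le hc hzc, hz.2, H.left_inv hz.1]
  · intro z hzc h0
    rw [hF₁ z hzc] at h0
    exact hz z hzc (hsymm _ h0)
  · intro z hzc h0
    have : Ω.piecewise F₂ F₁ z = F₂ z := by
      by_cases h : z ∈ Ω
      · simp [h]
      · rw [piecewise_eq_of_notMem _ _ _ h]
        exact (hfr z ⟨hzc, fun hh => h (interior_subset hh)⟩).symm
    rw [this, hF₂ z hzc] at h0
    exact hnz z hzc (hsymm _ h0)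
  · intro z hz
    simp [hz]

theorem deg_homotopy {X Y : Type*} [NormedAddCommGroup X] [NormedSpace ℝ X]
    [FiniteDimensional ℝ X] [NormedAddCommGroup Y] [NormedSpace ℝ Y]
    (H : OpenPartialHomeomorph X Y) (hH0 : (0 : X) ∈ H.source) (hH : H 0 = 0)
    (Ω : Set X) (hb : Bornology.IsBounded Ω) (hΩ : Ω ∈ nhds (0 : X))
    (g₀ : X → Y) (G : ℝ × X → Y) (hg₀ : ContinuousOn g₀ (closure Ω))
    (hG : ContinuousOn G (Icc 0 1 ×ˢ closure Ω))
    (hloc : ∀ᶠ z in nhds (0 : X), g₀ z = H z)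
    (hz : ∀ z ∈ closure Ω, g₀ z = 0 → z = 0)
    (hfr : ∀ z ∈ frontier Ω, ∀ t ∈ Icc (0 : ℝ) 1, G (t, z) ≠ 0)
    (h1 : ∀ z ∈ closure Ω, G (1, z) ≠ 0)
    (heq : ∀ z ∈ frontier Ω, g₀ z = G (0, z)) : False := by
  have hcpt : IsCompact (closure Ω) := hb.isCompact_closure
  set Z : Set X := Prod.snd '' ((Icc (0 : ℝ) 1 ×ˢ closure Ω) ∩ G ⁻¹' {0}) with hZdef
  have hcl : IsClosed ((Icc (0 : ℝ) 1 ×ˢ closure Ω) ∩ G ⁻¹' {0}) :=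
    hG.preimage_isClosed_of_isClosed (isClosed_Icc.prod isClosed_closure) isClosed_singleton
  have hZc : IsCompact Z :=
    ((isCompact_Icc.prod hcpt).of_isClosed_subset hcl inter_subset_left).image continuous_snd
  have hdis : Disjoint (frontier Ω) Z := by
    rw [Set.disjoint_left]
    rintro z hz ⟨⟨t, z'⟩, ⟨⟨ht, hz'⟩, h0⟩, rfl⟩
    exact hfr _ hz t ht h0
  obtain ⟨lam, hlam0, hlam1, hlam⟩ :=
    exists_continuous_zero_one_of_isClosed isClosed_frontier hZc.isClosed hdis
  refine deg_lemma H hH0 hH Ω hb hΩ g₀ (fun z => G (lam z, z)) hg₀ ?_ hloc hz ?_ ?_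
  · refine hG.comp (by fun_prop) ?_
    intro z hz
    exact ⟨hlam z, hz⟩
  · intro z hz h0
    have : z ∈ Z := ⟨(lam z, z), ⟨⟨hlam z, hz⟩, h0⟩, rfl⟩
    have h2 := hlam1 this
    simp only [Pi.one_apply] at h2
    rw [h2] at h0
    exact h1 z hz h0
  · intro z hz
    have h2 := hlam0 hz
    simp only [Pi.zero_apply] at h2
    rw [h2]
    exact heq z hz

/-- perturbation to a nonvanishing map into a higher dimensional space -/
theorem perturb {E E' : Type*} [NormedAddCommGroup E] [NormedSpace ℝ E]
    [FiniteDimensional ℝ E] [NormedAddCommGroup E'] [NormedSpace ℝ E'] [FiniteDimensional ℝ E']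
    (hdim : Module.finrank ℝ E < Module.finrank ℝ E') (K : Set E) (hK : IsCompact K)
    (k : E → E') (hk : ContinuousOn k K) (η : ℝ) (hη : 0 < η) :
    ∃ k' : E → E', Continuous k' ∧ (∀ z, k' z ≠ 0) ∧ ∀ z ∈ K, ‖k' z - k z‖ < η := by
  obtain ⟨F, hF⟩ := ContinuousMap.exists_restrict_eq (Y := E') hK.isClosed
      ⟨_, continuousOn_iff_continuous_domRestrict.1 hk⟩
  have hFk : ∀ z ∈ K, F z = k z := fun z hz => by
    exact congrArg (fun G => G ⟨z, hz⟩) hF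
  have hUC : UniformContinuousOn F (cthickening 1 K) :=
    hK.cthickening.uniformContinuousOn_of_continuous F.continuous.continuousOn
  obtain ⟨d, hd, hfd⟩ := Metric.uniformContinuousOn_iff.mp hUC (η / 4) (by positivity)
  obtain ⟨g, hgc, hg⟩ := F.continuous.exists_contDiff_dist_le_of_forall_mem_ball_dist_le
    (lt_min one_pos hd)
  have hgF : ∀ z ∈ K, dist (g z) (F z) ≤ η / 4 := by
    intro z hz
    refine hg _ _ fun y hy => ?_
    rw [mem_ball, lt_min_iff] at hy
    exact (hfd _ (mem_cthickening_of_dist_le _ z _ _ hz hy.1.le) _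
      (self_subset_cthickening _ hz) hy.2).le
  have hdense := (hgc.of_le (by simp) : ContDiff ℝ 1 g).dense_compl_range_of_finrank_lt_finrank hdim
  obtain ⟨c, hc, hcr⟩ := hdense.exists_mem_open isOpen_ball
    ⟨(0 : E'), mem_ball_self (show (0 : ℝ) < η / 4 by positivity)⟩
  rw [mem_ball_zero_iff] at hcr
  refine ⟨fun z => g z - c, hgc.continuous.sub continuous_const, ?_, ?_⟩
  · intro z h0
    exact hc ⟨z, sub_eq_zero.1 h0⟩
  · intro z hz
    have h1 := hgF z hz
    rw [hFk z hz, dist_eq_norm] at h1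
    calc ‖g z - c - k z‖ = ‖(g z - k z) - c‖ := by congr 1; abel
      _ ≤ ‖g z - k z‖ + ‖c‖ := norm_sub_le _ _
      _ < η := by linarith

section TL
variable {Ep Fp E₂ F₂ : Type*}
  [NormedAddCommGroup Ep] [NormedSpace ℝ Ep] [FiniteDimensional ℝ Ep]
  [NormedAddCommGroup Fp] [NormedSpace ℝ Fp] [FiniteDimensional ℝ Fp]
  [NormedAddCommGroup E₂] [NormedSpace ℝ E₂] [FiniteDimensional ℝ E₂]
  [NormedAddCommGroup F₂] [NormedSpace ℝ F₂] [FiniteDimensional ℝ F₂]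

theorem tl_aux {E : Type*} [NormedAddCommGroup E] [NormedSpace ℝ E] {ρ : ℝ} {a b b' : E}
    (t : ℝ) (ht : t ∈ Icc (0 : ℝ) 1) (ha : ‖a‖ < ρ / 2) (hb : ‖b‖ = ρ) (hb' : ‖b' - b‖ < ρ / 4) :
    (1 - t) • (a - b) - t • b' ≠ 0 := by
  intro h
  have h1 : b = (1 - t) • a - t • (b' - b) := by
    have h2 : (1 - t) • a - t • (b' - b) - b = (1 - t) • (a - b) - t • b' := by module
    rw [h] at h2
    exact (sub_eq_zero.1 h2).symm
  have h3 : ‖b‖ ≤ (1 - t) * ‖a‖ + t * ‖b' - b‖ := by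
    calc ‖b‖ = ‖(1 - t) • a - t • (b' - b)‖ := congrArg _ h1
      _ ≤ ‖(1 - t) • a‖ + ‖t • (b' - b)‖ := norm_sub_le _ _
      _ = _ := by
        rw [norm_smul, norm_smul, Real.norm_of_nonneg ht.1, Real.norm_of_nonneg (by linarith [ht.2])]
  have h4 : (1 - t) * ‖a‖ ≤ 1 * ‖a‖ :=
    mul_le_mul_of_nonneg_right (by linarith [ht.1]) (norm_nonneg _)
  have h5 : t * ‖b' - b‖ ≤ 1 * ‖b' - b‖ :=
    mul_le_mul_of_nonneg_right ht.2 (norm_nonneg _)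
  have h6 := norm_nonneg a
  linarith

theorem tl_core (H : OpenPartialHomeomorph (E₂ × F₂) (Ep × Fp)) (hH0 : (0 : E₂ × F₂) ∈ H.source)
    (O : Set F₂) (O' : Set E₂) (hOb : Bornology.IsBounded O) (hOb' : Bornology.IsBounded O')
    (hO : O ∈ nhds (0 : F₂)) (hO' : O' ∈ nhds (0 : E₂))
    (φ : F₂ → Ep × Fp) (ψ : E₂ → Ep × Fp)
    (hφ : ContinuousOn φ (closure O)) (hψ : ContinuousOn ψ (closure O'))
    (ρ : ℝ) (hφa : ∀ u ∈ closure O, ‖(φ u).1‖ < ρ / 2)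
    (hφb : ∀ u ∈ frontier O, ‖(φ u).2‖ = ρ)
    (hψb : ∀ v ∈ closure O', ‖(ψ v).2‖ < ρ / 2)
    (hψa : ∀ v ∈ frontier O', ‖(ψ v).1‖ = ρ)
    (hinj : ∀ u ∈ closure O, ∀ v ∈ closure O', φ u = ψ v → u = 0 ∧ v = 0)
    (hφ0 : ∀ᶠ u in nhds (0 : F₂), φ u = H (0, u))
    (hψ0 : ∀ᶠ v in nhds (0 : E₂), ψ v = H (v, 0))
    (ψ' : E₂ → Ep) (φ' : F₂ → Fp)
    (hψ'c : ContinuousOn ψ' (closure O')) (hφ'c : ContinuousOn φ' (closure O))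
    (hψ' : ∀ v ∈ closure O', ‖ψ' v - (ψ v).1‖ < ρ / 4)
    (hφ' : ∀ u ∈ closure O, ‖φ' u - (φ u).2‖ < ρ / 4)
    (hnz : (∀ v ∈ closure O', ψ' v ≠ 0) ∨ (∀ u ∈ closure O, φ' u ≠ 0)) : False := by
  set Ω : Set (E₂ × F₂) := O' ×ˢ O with hΩdef
  have hΩ : Ω ∈ nhds (0 : E₂ × F₂) := prod_mem_nhds hO' hO
  have hcl : closure Ω = closure O' ×ˢ closure O := closure_prod_eq
  -- small radius
  obtain ⟨d, hd, hsrc, hφd, hψd⟩ : ∃ d > 0, (∀ z : E₂ × F₂, ‖z‖ < 2 * d → z ∈ H.source) ∧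
      (∀ u : F₂, ‖u‖ < 2 * d → φ u = H (0, u)) ∧ (∀ v : E₂, ‖v‖ < 2 * d → ψ v = H (v, 0)) := by
    obtain ⟨d1, hd1, h1⟩ := Metric.eventually_nhds_iff_ball.1 (H.open_source.eventually_mem hH0)
    obtain ⟨d2, hd2, h2⟩ := Metric.eventually_nhds_iff_ball.1 hφ0
    obtain ⟨d3, hd3, h3⟩ := Metric.eventually_nhds_iff_ball.1 hψ0
    simp only [mem_ball_zero_iff] at h1 h2 h3
    refine ⟨min d1 (min d2 d3) / 2, by positivity, ?_, ?_, ?_⟩ <;> intro z hz <;>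
      rw [mul_div_cancel₀ _ two_ne_zero] at hz
    · exact h1 z (hz.trans_le (min_le_left _ _))
    · exact h2 z (hz.trans_le ((min_le_right _ _).trans (min_le_left _ _)))
    · exact h3 z (hz.trans_le ((min_le_right _ _).trans (min_le_right _ _)))
  -- shrink so that the small ball lies in Ω
  obtain ⟨d', hd', hdd, hdΩ⟩ : ∃ d' > 0, d' ≤ d ∧ ball (0 : E₂ × F₂) (2 * d') ⊆ interior Ω := by
    obtain ⟨d1, hd1, h1⟩ := Metric.mem_nhds_iff.1 (interior_mem_nhds.2 hΩ)
    refine ⟨min d (d1 / 2), by positivity, min_le_left _ _, (ball_subset_ball ?_).trans h1⟩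
    have := min_le_right d (d1 / 2)
    linarith
  obtain ⟨lam, hlam0, hlam1, hlam⟩ := exists_continuous_zero_one_of_isClosed
    (X := E₂ × F₂) (s := (ball 0 d')ᶜ) (t := closedBall 0 (d' / 2)) isOpen_ball.isClosed_compl
    isClosed_closedBall (by
      rw [Set.disjoint_left]
      intro z hz hz'
      exact hz (closedBall_subset_ball (by linarith) hz'))
  set g : E₂ × F₂ → Ep × Fp := fun z => φ z.2 - ψ z.1 with hgdef
  have hgc : ContinuousOn g (closure Ω) := by
    rw [hcl]
    exact (hφ.comp continuousOn_snd fun z hz => hz.2).sub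
      (hψ.comp continuousOn_fst fun z hz => hz.1)
  set K : E₂ × F₂ → Ep × Fp :=
    fun z => H (-(lam z) • z.1, z.2) - H ((1 - lam z) • z.1, 0) with hKdef
  have hn1 : ∀ z : E₂ × F₂, ‖(-(lam z) • z.1, z.2)‖ ≤ ‖z‖ := by
    intro z
    rw [Prod.norm_def, Prod.norm_def]
    refine max_le_max ?_ le_rfl
    rw [norm_smul, norm_neg, Real.norm_of_nonneg (hlam z).1]
    exact mul_le_of_le_one_left (norm_nonneg _) (hlam z).2
  have hn2 : ∀ z : E₂ × F₂, ‖((1 - lam z) • z.1, (0 : F₂))‖ ≤ ‖z‖ := by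
    intro z
    rw [Prod.norm_def, Prod.norm_def]
    refine max_le_max ?_ (by simp)
    rw [norm_smul, Real.norm_of_nonneg (by linarith [(hlam z).2])]
    exact mul_le_of_le_one_left (norm_nonneg _) (by linarith [(hlam z).1])
  have hKc : ∀ z : E₂ × F₂, ‖z‖ < 2 * d → ContinuousAt K z := by
    intro z hz
    have hl : ContinuousAt lam z := lam.continuous.continuousAt
    refine ContinuousAt.sub ?_ ?_
    · exact ContinuousAt.comp (f := fun z : E₂ × F₂ => (-(lam z) • z.1, z.2)) (g := H)
        (H.continuousAt (hsrc _ ((hn1 z).trans_lt hz))) (by fun_prop)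
    · exact ContinuousAt.comp (f := fun z : E₂ × F₂ => ((1 - lam z) • z.1, (0 : F₂))) (g := H)
        (H.continuousAt (hsrc _ ((hn2 z).trans_lt hz))) (by fun_prop)
  have hKg : ∀ z : E₂ × F₂, ‖z‖ < 2 * d → d' ≤ ‖z‖ → K z = g z := by
    intro z hz hz'
    have h0 : lam z = 0 := hlam0 (by simpa using hz')
    simp only [hKdef, hgdef, h0]
    rw [hφd _ ((norm_snd_le z).trans_lt hz), hψd _ ((norm_fst_le z).trans_lt hz)]
    simp
  classical
  set g₀ : E₂ × F₂ → Ep × Fp := fun z => if ‖z‖ < d' then K z else g z with hg₀def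
  have hg₀K : ∀ z : E₂ × F₂, ‖z‖ < 2 * d → g₀ z = K z := by
    intro z hz
    by_cases h : ‖z‖ < d'
    · simp [hg₀def, h]
    · simp only [hg₀def, h, if_false]
      exact (hKg z hz (not_lt.1 h)).symm
  have hg₀c : ContinuousOn g₀ (closure Ω) := by
    intro z hz
    by_cases h : ‖z‖ < 2 * d
    · refine ContinuousAt.continuousWithinAt ((hKc z h).congr ?_)
      have : ∀ᶠ w : E₂ × F₂ in nhds z, ‖w‖ < 2 * d :=
        continuous_norm.continuousAt.eventually (gt_mem_nhds h)
      exact this.mono fun w hw => (hg₀K w hw).symm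
    · have hlt : d' < ‖z‖ := by linarith
      have : ∀ᶠ w : E₂ × F₂ in nhds z, d' < ‖w‖ :=
        continuous_norm.continuousAt.eventually (lt_mem_nhds hlt)
      refine (hgc z hz).congr_of_eventuallyEq (Filter.Eventually.filter_mono nhdsWithin_le_nhds
        (this.mono fun w hw => ?_)) ?_
      · simp [hg₀def, not_lt.2 hw.le]
      · simp [hg₀def, not_lt.2 hlt.le]
  -- the local homeomorphism
  set H' : OpenPartialHomeomorph (E₂ × F₂) (Ep × Fp) :=
    (((Homeomorph.neg E₂).prodCongr (Homeomorph.refl F₂)).transOpenPartialHomeomorph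
      H).transHomeomorph (Homeomorph.addRight (-(H 0))) with hH'def
  have hH' : ∀ z, H' z = H (-z.1, z.2) - H 0 := by
    intro z
    simp [hH'def, sub_eq_add_neg]
    rfl
  set G : ℝ × (E₂ × F₂) → Ep × Fp := fun w =>
    ((1 - w.1) • ((φ w.2.2).1 - (ψ w.2.1).1) - w.1 • ψ' w.2.1,
     -((1 - w.1) • ((ψ w.2.1).2 - (φ w.2.2).2) - w.1 • φ' w.2.2)) with hGdef
  refine deg_homotopy H' (by
      have : (-(0 : E₂), (0 : F₂)) ∈ H.source := by rw [neg_zero]; exact hH0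
      exact this) (by
      rw [hH', Prod.fst_zero, Prod.snd_zero, neg_zero]
      exact sub_self _)
    Ω (hOb'.prod hOb) hΩ g₀ G hg₀c ?_ ?_ ?_ ?_ ?_ ?_
  · rw [hcl]
    have c1 : ContinuousOn (fun w : ℝ × (E₂ × F₂) => φ w.2.2)
        (Icc 0 1 ×ˢ (closure O' ×ˢ closure O)) :=
      hφ.comp (by fun_prop) fun w hw => hw.2.2
    have c2 : ContinuousOn (fun w : ℝ × (E₂ × F₂) => ψ w.2.1)
        (Icc 0 1 ×ˢ (closure O' ×ˢ closure O)) :=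
      hψ.comp (by fun_prop) fun w hw => hw.2.1
    have c3 : ContinuousOn (fun w : ℝ × (E₂ × F₂) => φ' w.2.2)
        (Icc 0 1 ×ˢ (closure O' ×ˢ closure O)) :=
      hφ'c.comp (by fun_prop) fun w hw => hw.2.2
    have c4 : ContinuousOn (fun w : ℝ × (E₂ × F₂) => ψ' w.2.1)
        (Icc 0 1 ×ˢ (closure O' ×ˢ closure O)) :=
      hψ'c.comp (by fun_prop) fun w hw => hw.2.1
    simp only [hGdef]
    have c0 : ContinuousOn (fun w : ℝ × (E₂ × F₂) => w.1)
        (Icc 0 1 ×ˢ (closure O' ×ˢ closure O)) := continuousOn_fst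
    exact (((continuousOn_const.sub c0).smul (c1.fst.sub c2.fst)).sub (c0.smul c4)).prodMk
      ((((continuousOn_const.sub c0).smul (c2.snd.sub c1.snd)).sub (c0.smul c3)).neg)
  · have : ∀ᶠ z : E₂ × F₂ in nhds 0, z ∈ ball (0 : E₂ × F₂) (d' / 2) :=
      ball_mem_nhds _ (by positivity)
    filter_upwards [this] with z hz
    rw [mem_ball_zero_iff] at hz
    have hl : lam z = 1 := hlam1 (by simpa using hz.le)
    rw [hg₀K z (by linarith), hH']
    simp only [hKdef, hl]
    simp
    rfl
  · intro z hz h0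
    by_cases h : ‖z‖ < d'
    · rw [hg₀K z (by linarith)] at h0
      have h1 := H.injOn (hsrc _ ((hn1 z).trans_lt (by linarith)))
        (hsrc _ ((hn2 z).trans_lt (by linarith))) (sub_eq_zero.1 h0)
      rw [Prod.mk.injEq] at h1
      have h2 : z.1 = 0 := by
        have : (1 - lam z) • z.1 - -(lam z) • z.1 = 0 := by rw [h1.1]; simp
        rw [← sub_smul] at this
        simpa using this
      exact Prod.ext h2 h1.2
    · simp only [hg₀def, h, if_false, hgdef] at h0
      rw [hcl] at hz
      have := hinj z.2 hz.2 z.1 hz.1 (sub_eq_zero.1 h0)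
      exact Prod.ext this.2 this.1
  · intro z hz t ht h0
    rw [hΩdef, frontier_prod_eq] at hz
    simp only [hGdef, Prod.mk_eq_zero, neg_eq_zero] at h0
    rcases hz with ⟨h1, h2⟩ | ⟨h1, h2⟩
    · exact tl_aux t ht (hψb _ h1) (hφb _ h2) (hφ' _ (frontier_subset_closure h2)) h0.2
    · exact tl_aux t ht (hφa _ h2) (hψa _ h1) (hψ' _ (frontier_subset_closure h1)) h0.1
  · intro z hz h0
    rw [hcl] at hz
    simp only [hGdef, Prod.mk_eq_zero] at h0
    simp at h0
    rcases hnz with h | h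
    · exact h _ hz.1 h0.1
    · exact h _ hz.2 h0.2
  · intro z hz
    have hnot : ¬ ‖z‖ < d' := by
      intro h
      exact hz.2 (hdΩ (by rw [mem_ball_zero_iff]; linarith))
    simp only [hg₀def, hnot, if_false, hgdef, hGdef]
    ext <;> simp

theorem tl_main (H : OpenPartialHomeomorph (E₂ × F₂) (Ep × Fp)) (hH0 : (0 : E₂ × F₂) ∈ H.source)
    (O : Set F₂) (O' : Set E₂) (hOb : Bornology.IsBounded O) (hOb' : Bornology.IsBounded O')
    (hO : O ∈ nhds (0 : F₂)) (hO' : O' ∈ nhds (0 : E₂))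
    (φ : F₂ → Ep × Fp) (ψ : E₂ → Ep × Fp)
    (hφ : ContinuousOn φ (closure O)) (hψ : ContinuousOn ψ (closure O'))
    (ρ : ℝ) (hρ : 0 < ρ) (hφa : ∀ u ∈ closure O, ‖(φ u).1‖ < ρ / 2)
    (hφb : ∀ u ∈ frontier O, ‖(φ u).2‖ = ρ)
    (hψb : ∀ v ∈ closure O', ‖(ψ v).2‖ < ρ / 2)
    (hψa : ∀ v ∈ frontier O', ‖(ψ v).1‖ = ρ)
    (hinj : ∀ u ∈ closure O, ∀ v ∈ closure O', φ u = ψ v → u = 0 ∧ v = 0)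
    (hφ0 : ∀ᶠ u in nhds (0 : F₂), φ u = H (0, u))
    (hψ0 : ∀ᶠ v in nhds (0 : E₂), ψ v = H (v, 0)) :
    Module.finrank ℝ Ep ≤ Module.finrank ℝ E₂ ∧ Module.finrank ℝ Fp ≤ Module.finrank ℝ F₂ := by
  have hρ4 : 0 < ρ / 4 := by positivity
  constructor
  · by_contra hlt
    obtain ⟨ψ', h1, h2, h3⟩ := perturb (not_le.1 hlt) (closure O') hOb'.isCompact_closure
      (fun v => (ψ v).1) (continuous_fst.comp_continuousOn hψ) (ρ / 4) hρ4
    exact tl_core H hH0 O O' hOb hOb' hO hO' φ ψ hφ hψ ρ hφa hφb hψb hψa hinj hφ0 hψ0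
      ψ' (fun u => (φ u).2) h1.continuousOn (continuous_snd.comp_continuousOn hφ) h3
      (by simpa using fun _ _ => hρ4) (Or.inl fun v _ => h2 v)
  · by_contra hlt
    obtain ⟨φ', h1, h2, h3⟩ := perturb (not_le.1 hlt) (closure O) hOb.isCompact_closure
      (fun v => (φ v).2) (continuous_snd.comp_continuousOn hφ) (ρ / 4) hρ4
    exact tl_core H hH0 O O' hOb hOb' hO hO' φ ψ hφ hψ ρ hφa hφb hψb hψa hinj hφ0 hψ0
      (fun v => (ψ v).1) φ' (continuous_fst.comp_continuousOn hψ) h1.continuousOn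
      (by simpa using fun _ _ => hρ4) h3 (Or.inr fun v _ => h2 v)
end TL

section Dyn
variable {M : Type*} [MetricSpace M]

/-- forgetful hom from homeomorphisms to permutations -/
def homeoToPerm (M : Type*) [TopologicalSpace M] : (M ≃ₜ M) →* Equiv.Perm M where
  toFun f := f.toEquiv
  map_one' := rfl
  map_mul' _ _ := rfl

theorem iterZ_eq (f : M ≃ₜ M) (k : ℤ) (z : M) : iterZ f k z = (f ^ k) z := by
  have : homeoToPerm M (f ^ k) = (homeoToPerm M f) ^ k := map_zpow _ _ _
  exact (congrArg (fun g : Equiv.Perm M => g z) this).symm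

theorem iterZ_continuous (f : M ≃ₜ M) (k : ℤ) : Continuous (iterZ f k) := by
  have : iterZ f k = (f ^ k : M ≃ₜ M) := funext (iterZ_eq f k)
  rw [this]
  exact (f ^ k : M ≃ₜ M).continuous

theorem iterZ_zero (f : M ≃ₜ M) (z : M) : iterZ f 0 z = z := by
  simp [iterZ]

theorem iterZ_add (f : M ≃ₜ M) (j k : ℤ) (z : M) :
    iterZ f (j + k) z = iterZ f j (iterZ f k z) := by
  simp [iterZ, zpow_add]

theorem iterZ_neg_self (f : M ≃ₜ M) (k : ℤ) (z : M) : iterZ f (-k) (iterZ f k z) = z := by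
  rw [← iterZ_add, neg_add_cancel, iterZ_zero]

theorem iterZ_self_neg (f : M ≃ₜ M) (k : ℤ) (z : M) : iterZ f k (iterZ f (-k) z) = z := by
  rw [← iterZ_add, add_neg_cancel, iterZ_zero]

theorem iterZ_nat (f : M ≃ₜ M) (l : ℕ) (z : M) : iterZ f (l : ℤ) z = (f.toEquiv ^ l) z := by
  simp [iterZ]

theorem iterZ_injective (f : M ≃ₜ M) (k : ℤ) : Function.Injective (iterZ f k) := by
  intro a b h
  rw [← iterZ_neg_self f k a, h, iterZ_neg_self]

theorem iterZ_symm (f : M ≃ₜ M) (k : ℤ) (z : M) : iterZ f.symm k z = iterZ f (-k) z := by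
  rw [iterZ_eq, iterZ_eq]
  have : f.symm = f⁻¹ := rfl
  rw [this, inv_zpow, zpow_neg]

theorem Ws_symm (f : M ≃ₜ M) (p : M) : Ws f.symm p = Wu f p := by
  ext y
  simp only [Ws, Wu, mem_ofPred_eq, iterZ_symm]
  constructor
  · intro h
    have := h.comp Filter.tendsto_neg_atBot_atTop
    simpa [Function.comp_def] using this
  · intro h
    have := h.comp Filter.tendsto_neg_atTop_atBot
    simpa [Function.comp_def] using this

theorem WsLoc_symm (f : M ≃ₜ M) (ε : ℝ) (p : M) : WsLoc f.symm ε p = WuLoc f ε p := by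
  ext y
  simp only [WsLoc, WuLoc, mem_ofPred_eq, iterZ_symm]
  constructor
  · intro h k hk
    simpa using h (-k) (by omega)
  · intro h k hk
    exact h (-k) (by omega)

theorem IsExpansive.symm {f : M ≃ₜ M} {α : ℝ} (h : IsExpansive f α) : IsExpansive f.symm α := by
  intro a b hab
  obtain ⟨k, hk⟩ := h a b hab
  exact ⟨-k, by simpa [iterZ_symm] using hk⟩

theorem SpSet_symm (f : M ≃ₜ M) (x : M) (ν : ℝ) (p : M) :
    SpSet f.symm x ν p = UpSet f x ν p := by
  rw [SpSet, UpSet, Ws_symm]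

theorem mem_Ws_self (f : M ≃ₜ M) (p : M) : p ∈ Ws f p := by
  simp [Ws]

theorem mem_WsLoc_self (f : M ≃ₜ M) {ε : ℝ} (hε : 0 ≤ ε) (p : M) : p ∈ WsLoc f ε p := by
  intro k _
  simpa using hε

theorem WsLoc_iter {f : M ≃ₜ M} {ε : ℝ} {p y : M} (h : y ∈ WsLoc f ε p) (j : ℤ) (hj : 0 ≤ j) :
    iterZ f j y ∈ WsLoc f ε (iterZ f j p) := by
  intro k hk
  rw [← iterZ_add, ← iterZ_add]
  exact h _ (by omega)

theorem Ws_iter_iff {f : M ≃ₜ M} {p y : M} (j : ℤ) :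
    iterZ f j y ∈ Ws f (iterZ f j p) ↔ y ∈ Ws f p := by
  simp only [Ws, mem_ofPred_eq, ← iterZ_add]
  constructor
  · intro h
    have := h.comp (Filter.tendsto_atTop_add_const_right _ (-j) Filter.tendsto_id)
    simpa [Function.comp_def] using this
  · intro h
    exact h.comp (Filter.tendsto_atTop_add_const_right _ j Filter.tendsto_id)

theorem isClosed_WsRel (f : M ≃ₜ M) (ε : ℝ) : IsClosed {w : M × M | w.2 ∈ WsLoc f ε w.1} := by
  have : {w : M × M | w.2 ∈ WsLoc f ε w.1} =
      ⋂ (k : ℤ) (_ : 0 ≤ k), {w : M × M | dist (iterZ f k w.1) (iterZ f k w.2) ≤ ε} := by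
    ext w
    simp [WsLoc]
  rw [this]
  refine isClosed_iInter fun k => isClosed_iInter fun _ => ?_
  exact isClosed_le (((iterZ_continuous f k).comp continuous_fst).dist
    ((iterZ_continuous f k).comp continuous_snd)) continuous_const

theorem isClosed_WsLoc (f : M ≃ₜ M) (ε : ℝ) (p : M) : IsClosed (WsLoc f ε p) :=
  (isClosed_WsRel f ε).preimage (f := fun y => (p, y)) (by fun_prop)

theorem eq_of_WsLoc_WuLoc {f : M ≃ₜ M} {α ε : ℝ} (hexp : IsExpansive f α) (hεα : ε < α)
    {p y : M} (hs : y ∈ WsLoc f ε p) (hu : y ∈ WuLoc f ε p) : y = p := by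
  by_contra h
  obtain ⟨k, hk⟩ := hexp p y (Ne.symm h)
  rcases le_total 0 k with h0 | h0
  · exact absurd (hs k h0) (by linarith)
  · exact absurd (hu k h0) (by linarith)

/-- uniform contraction -/
theorem unif_contr [CompactSpace M] {f : M ≃ₜ M} {α ε : ℝ} (hexp : IsExpansive f α) (hεα : ε < α)
    (η : ℝ) (hη : 0 < η) :
    ∃ N : ℕ, ∀ p y : M, y ∈ WsLoc f ε p → ∀ k : ℤ, (N : ℤ) ≤ k →
      dist (iterZ f k p) (iterZ f k y) < η := by
  let A : ℕ → Set (M × M) := fun N =>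
    ⋂ (k : ℤ) (_ : -(N : ℤ) ≤ k), {w : M × M | dist (iterZ f k w.1) (iterZ f k w.2) ≤ ε}
  have hAc : ∀ N, IsClosed (A N) := fun N => by
    refine isClosed_iInter fun k => isClosed_iInter fun _ => ?_
    exact isClosed_le (((iterZ_continuous f k).comp continuous_fst).dist
      ((iterZ_continuous f k).comp continuous_snd)) continuous_const
  have hmem : ∀ N (w : M × M), w ∈ A N ↔
      ∀ k : ℤ, -(N : ℤ) ≤ k → dist (iterZ f k w.1) (iterZ f k w.2) ≤ ε := by
    intro N w
    simp [A]
  have hanti : ∀ i j, i ≤ j → A j ⊆ A i := by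
    intro i j hij w hw
    rw [hmem] at hw ⊢
    intro k hk
    exact hw k (by omega)
  obtain ⟨N, hN⟩ := exists_subset_nhds_of_isCompact' (V := A)
    (U := {w : M × M | dist w.1 w.2 < η})
    (directed_of_isDirected_le fun i j hij => hanti i j hij)
    (fun i => (hAc i).isCompact) hAc (by
      intro w hw
      rw [mem_iInter] at hw
      have : w.1 = w.2 := by
        by_contra h
        obtain ⟨k, hk⟩ := hexp _ _ h
        have := (hmem k.natAbs w).1 (hw _) k (by omega)
        linarith
      refine IsOpen.mem_nhds (isOpen_lt (continuous_fst.dist continuous_snd) continuous_const) ?_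
      simp [this, hη])
  refine ⟨N, fun p y hy k hk => ?_⟩
  refine hN (a := (iterZ f k p, iterZ f k y)) ((hmem _ _).2 fun j hj => ?_)
  simp only [← iterZ_add]
  exact hy _ (by omega)

theorem WsLoc_subset_Ws [CompactSpace M] {f : M ≃ₜ M} {α ε : ℝ} (hexp : IsExpansive f α)
    (hεα : ε < α) (p : M) : WsLoc f ε p ⊆ Ws f p := by
  intro y hy
  rw [Ws, mem_ofPred_eq, Metric.tendsto_atTop]
  intro η hη
  obtain ⟨N, hN⟩ := unif_contr hexp hεα η hη
  refine ⟨N, fun k hk => ?_⟩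
  simpa using hN p y hy k hk

theorem iterZ_period {f : M ≃ₜ M} {p : M} {l : ℕ} (hp : iterZ f l p = p) (k : ℕ) :
    iterZ f (l * k : ℤ) p = p := by
  induction k with
  | zero => simp [iterZ_zero]
  | succ k ih =>
    have : ((l : ℤ) * ((k + 1 : ℕ) : ℤ)) = l * k + l := by push_cast; ring
    rw [this, iterZ_add, hp, ih]

/-- distinct periodic points have disjoint stable sets -/
theorem Ws_disjoint {f : M ≃ₜ M} {p q z : M} {l m : ℕ} (hl : 1 ≤ l) (hm : 1 ≤ m)
    (hp : iterZ f l p = p) (hq : iterZ f m q = q) (hzp : z ∈ Ws f p) (hzq : z ∈ Ws f q) :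
    p = q := by
  have h0 : Filter.Tendsto (fun k : ℤ => dist (iterZ f k p) (iterZ f k q)) Filter.atTop (nhds 0) := by
    refine squeeze_zero (fun _ => dist_nonneg) (fun k => dist_triangle_right _ _ (iterZ f k z)) ?_
    simpa using Filter.Tendsto.add hzp hzq
  have h1 : Filter.Tendsto (fun k : ℕ => ((l : ℤ) * m * k)) Filter.atTop Filter.atTop := by
    have hlm : (0 : ℤ) < (l : ℤ) * m := by
      have : (0 : ℤ) < l := by omega
      have : (0 : ℤ) < m := by omega
      positivity
    exact Filter.Tendsto.const_mul_atTop' hlm tendsto_natCast_atTop_atTop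
  have h2 := h0.comp h1
  have h3 : ∀ k : ℕ, dist (iterZ f ((l : ℤ) * m * k) p) (iterZ f ((l : ℤ) * m * k) q) = dist p q := by
    intro k
    have e1 : ((l : ℤ) * m * k) = l * ((m * k : ℕ) : ℤ) := by push_cast; ring
    have e2 : ((l : ℤ) * m * k) = m * ((l * k : ℕ) : ℤ) := by push_cast; ring
    have := iterZ_period hp (m * k)
    rw [← e1] at this
    have h' := iterZ_period hq (l * k)
    rw [← e2] at h'
    rw [this, h']
  have h4 : Filter.Tendsto (fun _ : ℕ => dist p q) Filter.atTop (nhds 0) := by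
    simpa [Function.comp_def, h3] using h2
  exact dist_eq_zero.1 (tendsto_nhds_unique tendsto_const_nhds h4)

theorem mem_Ws_of_tendsto {f : M ≃ₜ M} {q z : M} {l : ℕ} (hl : 1 ≤ l) (hq : iterZ f l q = q)
    (h : Filter.Tendsto (fun k : ℕ => iterZ f (l * k : ℤ) z) Filter.atTop (nhds q)) :
    z ∈ Ws f q := by
  rw [Ws, mem_ofPred_eq, Metric.tendsto_atTop]
  intro η hη
  have hW : ∀ᶠ w in nhds q, ∀ i ∈ Finset.range l, dist (iterZ f i q) (iterZ f i w) < η := by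
    rw [Filter.eventually_all_finset]
    intro i _
    have hc : Continuous fun w => dist (iterZ f i q) (iterZ f i w) :=
      continuous_const.dist (iterZ_continuous f i)
    exact hc.continuousAt.eventually (gt_mem_nhds (by simpa using hη))
  obtain ⟨K, hK⟩ := Filter.eventually_atTop.1 (h.eventually hW)
  refine ⟨l * K, fun j hj => ?_⟩
  have hl0 : (0 : ℤ) < l := by omega
  have hdiv : (K : ℤ) ≤ j / l := by
    rw [Int.le_ediv_iff_mul_le hl0]
    linarith [mul_comm (K : ℤ) l]
  have hmod := Int.emod_nonneg j hl0.ne'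
  have hmod2 := Int.emod_lt_of_pos j hl0
  have hsplit : j = ((j % l).toNat : ℤ) + l * ((j / l).toNat : ℤ) := by
    rw [Int.toNat_of_nonneg hmod, Int.toNat_of_nonneg (by omega)]
    exact (Int.emod_add_mul_ediv j l).symm
  have := hK (j / l).toNat (by omega) (j % l).toNat (by rw [Finset.mem_range]; omega)
  rw [dist_zero_right, Real.norm_of_nonneg dist_nonneg]
  rw [hsplit, iterZ_add, iterZ_add, iterZ_period hq]
  exact this

theorem tendsto_of_mem_Ws {f : M ≃ₜ M} {q z : M} {l : ℕ} (hl : 1 ≤ l) (hq : iterZ f l q = q)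
    (h : z ∈ Ws f q) :
    Filter.Tendsto (fun k : ℕ => iterZ f (l * k : ℤ) z) Filter.atTop (nhds q) := by
  have h1 : Filter.Tendsto (fun k : ℕ => ((l : ℤ) * k)) Filter.atTop Filter.atTop := by
    have hl0 : (0 : ℤ) < (l : ℤ) := by omega
    exact Filter.Tendsto.const_mul_atTop' hl0 tendsto_natCast_atTop_atTop
  have h2 := Filter.Tendsto.comp h h1
  rw [tendsto_iff_dist_tendsto_zero]
  refine h2.congr fun k => ?_
  simp only [Function.comp_apply]
  rw [iterZ_period hq, dist_comm]

/-- hyperbolic chart -/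
structure HypChart (f : M ≃ₜ M) (p : M) (l : ℕ) {E F : Type*} [NormedAddCommGroup E]
    [NormedSpace ℝ E] [NormedAddCommGroup F] [NormedSpace ℝ F]
    (e : OpenPartialHomeomorph M (E × F)) : Prop where
  one_le : 1 ≤ l
  per : iterZ f l p = p
  mem : p ∈ e.source
  zero : e p = 0
  conj : ∀ z ∈ e.source, iterZ f l z ∈ e.source →
    e (iterZ f l z) = ((1 / 2 : ℝ) • (e z).1, (2 : ℝ) • (e z).2)

section chart
variable {E F : Type*} [NormedAddCommGroup E]
    [NormedSpace ℝ E] [NormedAddCommGroup F] [NormedSpace ℝ F]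

theorem HypChart.swap {f : M ≃ₜ M} {p : M} {l : ℕ} {e : OpenPartialHomeomorph M (E × F)}
    (h : HypChart f p l e) :
    HypChart f.symm p l (e.transHomeomorph (Homeomorph.prodComm E F)) where
  one_le := h.one_le
  per := by
    rw [iterZ_symm]
    conv_lhs => rw [← h.per]
    exact iterZ_neg_self _ _ _
  mem := h.mem
  zero := by simp [h.zero]
  conj := by
    intro z hz hz'
    simp only [OpenPartialHomeomorph.transHomeomorph_source] at hz hz'
    rw [iterZ_symm] at hz' ⊢
    have h1 := h.conj _ hz' (by rwa [iterZ_self_neg])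
    rw [iterZ_self_neg] at h1
    simp [h1, smul_smul]
    rfl

theorem HypChart.iter {f : M ≃ₜ M} {p : M} {l : ℕ} {e : OpenPartialHomeomorph M (E × F)}
    (h : HypChart f p l e) (j : ℤ) :
    HypChart f (iterZ f j p) l ((f ^ (-j) : M ≃ₜ M).transOpenPartialHomeomorph e) where
  one_le := h.one_le
  per := by rw [← iterZ_add, add_comm, iterZ_add, h.per]
  mem := by
    have : iterZ f (-j) (iterZ f j p) ∈ e.source := by rw [iterZ_neg_self]; exact h.mem
    rw [iterZ_eq] at this
    exact this
  zero := by
    have : e (iterZ f (-j) (iterZ f j p)) = 0 := by rw [iterZ_neg_self]; exact h.zero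
    rw [iterZ_eq] at this
    exact this
  conj := by
    intro z hz hz'
    have hz1 : (f ^ (-j) : M ≃ₜ M) z ∈ e.source := hz
    have hz2 : (f ^ (-j) : M ≃ₜ M) (iterZ f l z) ∈ e.source := hz'
    have key : (f ^ (-j) : M ≃ₜ M) (iterZ f l z) = iterZ f l ((f ^ (-j) : M ≃ₜ M) z) := by
      rw [← iterZ_eq, ← iterZ_eq, ← iterZ_add, ← iterZ_add, add_comm]
    rw [key] at hz2
    have := h.conj _ hz1 hz2
    rw [← key] at this
    exact this

end chart

theorem PerHr_iff {f : M ≃ₜ M} {n r : ℕ} {p : M} : p ∈ PerHr f n r ↔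
    ∃ l : ℕ, ∃ e : OpenPartialHomeomorph M (ModelSp n r), HypChart f p l e := by
  have hL : ∀ w : ModelSp n r, modelL n r w = ((1 / 2 : ℝ) • w.1, (2 : ℝ) • w.2) := by
    intro w
    ext i
    · simp [modelL]; ring
    · simp [modelL]
  constructor
  · rintro ⟨l, hl, hper, U, V, h, hU, hV, h0, hp, hp0, hconj⟩
    let U' : TopologicalSpace.Opens M := ⟨U, hU⟩
    let V' : TopologicalSpace.Opens (ModelSp n r) := ⟨V, hV⟩
    let e : OpenPartialHomeomorph M (ModelSp n r) :=
      ((U'.openPartialHomeomorphSubtypeCoe ⟨⟨p, hp⟩⟩).symm.trans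
        h.toOpenPartialHomeomorph).trans (V'.openPartialHomeomorphSubtypeCoe ⟨⟨0, h0⟩⟩)
    have hsrc : e.source = U := by
      ext z
      simp [e, U']
    have hval : ∀ z (hz : z ∈ U), e z = h ⟨z, hz⟩ := by
      intro z hz
      have : (U'.openPartialHomeomorphSubtypeCoe ⟨⟨p, hp⟩⟩).symm z = ⟨z, hz⟩ :=
        (U'.openPartialHomeomorphSubtypeCoe ⟨⟨p, hp⟩⟩).left_inv (x := ⟨z, hz⟩) (by simp)
      simp only [e, OpenPartialHomeomorph.coe_trans, Function.comp_apply, this]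
      rfl
    refine ⟨l, e, hl, by rw [iterZ_nat]; exact hper, by rw [hsrc]; exact hp, ?_, ?_⟩
    · rw [hval p hp, hp0]
    · intro z hz hz'
      rw [hsrc] at hz hz'
      rw [hval z hz, hval _ hz', ← hL]
      have := hconj z hz (by rw [← iterZ_nat]; exact hz')
      rw [← this]
      congr 3
  · rintro ⟨l, e, he⟩
    refine ⟨l, he.one_le, by rw [← iterZ_nat]; exact he.per, e.source, e.target,
      e.toHomeomorphSourceTarget, e.open_source, e.open_target, ?_, he.mem, ?_, ?_⟩
    · rw [← he.zero]
      exact e.map_source he.mem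
    · exact he.zero
    · intro z hz hz'
      rw [hL]
      have := he.conj z hz (by rw [iterZ_nat]; exact hz')
      rw [iterZ_nat] at this
      exact this

theorem PerHr_iter {f : M ≃ₜ M} {n r : ℕ} {p : M} (h : p ∈ PerHr f n r) (j : ℤ) :
    iterZ f j p ∈ PerHr f n r := by
  rw [PerHr_iff] at h ⊢
  obtain ⟨l, e, he⟩ := h
  exact ⟨l, _, he.iter j⟩

end Dyn

section Dyn2
variable {M : Type*} [MetricSpace M]
variable {E F : Type*} [NormedAddCommGroup E]
    [NormedSpace ℝ E] [NormedAddCommGroup F] [NormedSpace ℝ F]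

theorem HypChart.symm_zero {f : M ≃ₜ M} {p : M} {l : ℕ} {e : OpenPartialHomeomorph M (E × F)}
    (h : HypChart f p l e) : e.symm 0 = p := by
  rw [← h.zero, e.left_inv h.mem]

theorem HypChart.zero_mem {f : M ≃ₜ M} {p : M} {l : ℕ} {e : OpenPartialHomeomorph M (E × F)}
    (h : HypChart f p l e) : (0 : E × F) ∈ e.target := by
  rw [← h.zero]
  exact e.map_source h.mem

/-- pull an eventual property back through the chart -/
theorem HypChart.eventually_symm {f : M ≃ₜ M} {p : M} {l : ℕ}
    {e : OpenPartialHomeomorph M (E × F)} (h : HypChart f p l e) {P : M → Prop}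
    (hP : ∀ᶠ z in nhds p, P z) : ∀ᶠ w in nhds (0 : E × F), w ∈ e.target ∧ P (e.symm w) := by
  have hc : ContinuousAt e.symm 0 := e.continuousAt_symm h.zero_mem
  have : ∀ᶠ z in nhds (e.symm 0), P z := by rw [h.symm_zero]; exact hP
  exact (e.open_target.eventually_mem h.zero_mem).and (hc.eventually this)

theorem loc_stable_flat [CompactSpace M] {f : M ≃ₜ M} {α ε : ℝ} (hexp : IsExpansive f α)
    (hεα : ε < α) {p : M} {l : ℕ} {e : OpenPartialHomeomorph M (E × F)} (h : HypChart f p l e) :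
    ∀ᶠ z in nhds p, z ∈ WsLoc f ε p → z ∈ e.source ∧ (e z).2 = 0 := by
  have hU : ∀ᶠ z in nhds p, z ∈ e.source ∧ ‖e z‖ < 1 := by
    refine (e.open_source.eventually_mem h.mem).and ?_
    have : ContinuousAt (fun z => ‖e z‖) p := (e.continuousAt h.mem).norm
    exact this.eventually (gt_mem_nhds (by simp [h.zero]))
  obtain ⟨η, hη, hball⟩ := Metric.eventually_nhds_iff_ball.1 hU
  obtain ⟨N, hN⟩ := unif_contr hexp hεα η hη
  have hl := h.one_le
  have hW : ∀ᶠ z in nhds p, ∀ k ∈ Finset.range N,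
      iterZ f (l * k : ℤ) z ∈ e.source ∧ ‖e (iterZ f (l * k : ℤ) z)‖ < 1 := by
    rw [Filter.eventually_all_finset]
    intro k _
    have hc : ContinuousAt (iterZ f (l * k : ℤ)) p := (iterZ_continuous f _).continuousAt
    refine hc.eventually (p := fun w => w ∈ e.source ∧ ‖e w‖ < 1) ?_
    rw [iterZ_period h.per]
    exact hU
  filter_upwards [hW] with z hz hzs
  have hall : ∀ k : ℕ, iterZ f (l * k : ℤ) z ∈ e.source ∧ ‖e (iterZ f (l * k : ℤ) z)‖ < 1 := by
    intro k
    by_cases hk : k < N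
    · exact hz k (Finset.mem_range.2 hk)
    · have hle : (N : ℤ) ≤ l * k := by
        have : N ≤ l * k := (not_lt.1 hk).trans (Nat.le_mul_of_pos_left k hl)
        exact_mod_cast this
      have := hN p z hzs (l * k) hle
      rw [iterZ_period h.per, dist_comm] at this
      exact hball _ this
  have h0 : iterZ f (l * (0 : ℕ) : ℤ) z = z := by simp [iterZ_zero]
  have hind : ∀ k : ℕ, (e (iterZ f (l * k : ℤ) z)).2 = (2 : ℝ) ^ k • (e z).2 := by
    intro k
    induction k with
    | zero => rw [h0]; simp
    | succ k ih =>
      have hs : ((l : ℤ) * ((k + 1 : ℕ) : ℤ)) = l + l * k := by push_cast; ring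
      have h1 := (hall (k + 1)).1
      rw [hs, iterZ_add] at h1 ⊢
      rw [h.conj _ (hall k).1 h1]
      simp only [ih, smul_smul, pow_succ']
  have hz0 := hall 0
  rw [h0] at hz0
  refine ⟨hz0.1, ?_⟩
  by_contra hb
  have hb' : 0 < ‖(e z).2‖ := norm_pos_iff.2 hb
  obtain ⟨k, hk⟩ := pow_unbounded_of_one_lt (1 / ‖(e z).2‖) (one_lt_two (α := ℝ))
  have h2 := (norm_snd_le _).trans_lt (hall k).2
  rw [hind, norm_smul, Real.norm_of_nonneg (by positivity)] at h2
  rw [div_lt_iff₀ hb'] at hk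
  linarith

theorem param [CompactSpace M] {f : M ≃ₜ M} {α ε : ℝ} (hexp : IsExpansive f α)
    (hεα : ε < α) {q : M} {l : ℕ} {e : OpenPartialHomeomorph M (E × F)} (h : HypChart f q l e) :
    ∃ R > 0, ∃ ψ : E → M, ContinuousOn ψ (ball 0 R) ∧ InjOn ψ (ball 0 R) ∧
      (∀ v ∈ ball (0 : E) R, ψ v ∈ Ws f q) ∧
      (∀ z ∈ WsLoc f ε q, ∃ v ∈ ball (0 : E) (R / 2), ψ v = z) ∧
      ∀ᶠ v in nhds (0 : E), ψ v = e.symm (v, 0) := by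
  have hl := h.one_le
  set j : E → M := fun v => e.symm (v, 0) with hj
  have hj0 : j 0 = q := h.symm_zero
  have hsrc : ∀ᶠ z in nhds q, iterZ f l z ∈ e.source := by
    have hc : ContinuousAt (iterZ f l) q := (iterZ_continuous f _).continuousAt
    refine hc.eventually (p := fun w => w ∈ e.source) ?_
    rw [h.per]
    exact e.open_source.eventually_mem h.mem
  obtain ⟨c, hc, hball⟩ := Metric.eventually_nhds_iff_ball.1 (h.eventually_symm hsrc)
  have hnv : ∀ v : E, ‖v‖ < c → (v, (0 : F)) ∈ ball (0 : E × F) c := by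
    intro v hv
    rw [mem_ball_zero_iff, Prod.norm_def]
    simpa using hv
  have htar : ∀ v : E, ‖v‖ < c → (v, (0 : F)) ∈ e.target := fun v hv => (hball _ (hnv v hv)).1
  have hstep : ∀ v : E, ‖v‖ < c → iterZ f l (j v) = j ((1 / 2 : ℝ) • v) := by
    intro v hv
    have h1 := (hball _ (hnv v hv)).2
    have h2 := h.conj (j v) (e.map_target (htar v hv)) h1
    rw [hj] at h2
    simp only at h2
    rw [e.right_inv (htar v hv)] at h2
    simp only [smul_zero] at h2
    rw [hj]
    simp only
    rw [← h2, e.left_inv h1]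
  have hhalf : ∀ (k : ℕ) (v : E), ‖((1 / 2 : ℝ) ^ k) • v‖ ≤ ‖v‖ := by
    intro k v
    rw [norm_smul, Real.norm_of_nonneg (by positivity)]
    exact mul_le_of_le_one_left (norm_nonneg _) (pow_le_one₀ (by norm_num) (by norm_num))
  have hiter : ∀ (k : ℕ) (v : E), ‖v‖ < c → iterZ f (l * k : ℤ) (j v) = j ((1 / 2 : ℝ) ^ k • v) := by
    intro k v hv
    induction k with
    | zero => simp [iterZ_zero]
    | succ k ih =>
      have hs : ((l : ℤ) * ((k + 1 : ℕ) : ℤ)) = l + l * k := by push_cast; ring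
      rw [hs, iterZ_add, ih, hstep _ ((hhalf k v).trans_lt hv), smul_smul, pow_succ, mul_comm]
  have hjcont : ContinuousOn j (ball 0 c) := by
    refine e.continuousOn_symm.comp (by fun_prop) ?_
    intro v hv
    exact htar v (by simpa using hv)
  have hjinj : InjOn j (ball 0 c) := by
    intro v hv w hw hvw
    have := e.symm.injOn (htar v (by simpa using hv)) (htar w (by simpa using hw)) hvw
    exact (Prod.mk.inj this).1
  have hjWs : ∀ v : E, ‖v‖ < c → j v ∈ Ws f q := by
    intro v hv
    refine mem_Ws_of_tendsto hl h.per ?_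
    have h1 : Filter.Tendsto (fun k : ℕ => ((1 / 2 : ℝ) ^ k) • v) Filter.atTop (nhds 0) := by
      have := (tendsto_pow_atTop_nhds_zero_of_lt_one (r := (1 / 2 : ℝ)) (by norm_num)
        (by norm_num)).smul_const v
      simpa using this
    have h2 : ContinuousAt j 0 := hjcont.continuousAt (ball_mem_nhds 0 hc)
    have h3 := h2.tendsto.comp h1
    rw [hj0] at h3
    refine h3.congr fun k => ?_
    rw [hiter k v hv]
    rfl
  -- uniform time
  have hW : ∀ᶠ z in nhds q, (z ∈ WsLoc f ε q → z ∈ e.source ∧ (e z).2 = 0) ∧ ‖e z‖ < c / 2 := by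
    refine (loc_stable_flat hexp hεα h).and ?_
    have : ContinuousAt (fun z => ‖e z‖) q := (e.continuousAt h.mem).norm
    refine this.eventually (gt_mem_nhds ?_)
    simp only [h.zero, norm_zero]
    positivity
  obtain ⟨η, hη, hballη⟩ := Metric.eventually_nhds_iff_ball.1 hW
  obtain ⟨N, hN⟩ := unif_contr hexp hεα η hη
  have hNl : (N : ℤ) ≤ l * N := by
    have : N ≤ l * N := Nat.le_mul_of_pos_left N hl
    exact_mod_cast this
  have hsc : ∀ v : E, ‖v‖ < 2 ^ N * c → ‖(1 / 2 : ℝ) ^ N • v‖ < c := by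
    intro v hv
    rw [norm_smul, Real.norm_of_nonneg (by positivity), one_div, inv_pow, inv_mul_lt_iff₀ (by positivity)]
    exact hv
  refine ⟨2 ^ N * c, by positivity, fun v => iterZ f (-(l * N : ℤ)) (j ((1 / 2 : ℝ) ^ N • v)),
    ?_, ?_, ?_, ?_, ?_⟩
  · refine (iterZ_continuous f _).comp_continuousOn (hjcont.comp (by fun_prop) ?_)
    intro v hv
    rw [mem_ball_zero_iff] at hv ⊢
    exact hsc v hv
  · intro v hv w hw hvw
    rw [mem_ball_zero_iff] at hv hw
    have h1 := iterZ_injective f _ hvw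
    have h2 := hjinj (by simpa using hsc v hv) (by simpa using hsc w hw) h1
    exact smul_right_injective E (by positivity : ((1 / 2 : ℝ) ^ N) ≠ 0) h2
  · intro v hv
    rw [mem_ball_zero_iff] at hv
    rw [← Ws_iter_iff (l * N : ℤ), iterZ_self_neg, iterZ_period h.per]
    exact hjWs _ (hsc v hv)
  · intro z hz
    have hw1 : iterZ f (l * N : ℤ) z ∈ WsLoc f ε q := by
      have := WsLoc_iter hz (l * N : ℤ) (by positivity)
      rwa [iterZ_period h.per] at this
    have hw2 := hN q z hz (l * N) hNl
    rw [iterZ_period h.per, dist_comm] at hw2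
    obtain ⟨h1, h2⟩ := hballη _ hw2
    obtain ⟨h3, h4⟩ := h1 hw1
    set w := iterZ f (l * N : ℤ) z with hwdef
    have h5 : ‖(e w).1‖ < c / 2 := (norm_fst_le _).trans_lt h2
    have h6 : j (e w).1 = w := by
      rw [hj]
      simp only
      rw [← h4]
      exact e.left_inv h3
    refine ⟨(2 : ℝ) ^ N • (e w).1, ?_, ?_⟩
    · rw [mem_ball_zero_iff, norm_smul, Real.norm_of_nonneg (by positivity), mul_div_assoc]
      exact mul_lt_mul_of_pos_left h5 (by positivity)
    · have : (1 / 2 : ℝ) ^ N • (2 : ℝ) ^ N • (e w).1 = (e w).1 := by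
        rw [smul_smul, ← mul_pow]
        norm_num
      simp only [this, h6]
      rw [hwdef, iterZ_neg_self]
  · have : ∀ᶠ v in nhds (0 : E), v ∈ ball (0 : E) c := ball_mem_nhds 0 hc
    filter_upwards [this] with v hv
    rw [mem_ball_zero_iff] at hv
    rw [← hiter N v hv, iterZ_neg_self]

theorem stable_side [CompactSpace M] [FiniteDimensional ℝ E] [FiniteDimensional ℝ F]
    {f : M ≃ₜ M} {α ε : ℝ} (hexp : IsExpansive f α)
    (hεα : ε < α) {x : M} {ν : ℝ} {p : M} {l : ℕ} {e : OpenPartialHomeomorph M (E × F)}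
    (h : HypChart f p l e) (hp : p ∈ ball x ν) :
    ∃ ρ₀ > 0, ∀ ρ, 0 < ρ → ρ ≤ ρ₀ → ∃ N ∈ nhds p, N ⊆ e.source ∧ ∀ q ∈ N,
      ∀ {E' F' : Type} [NormedAddCommGroup E'] [NormedSpace ℝ E'] [NormedAddCommGroup F']
        [NormedSpace ℝ F'] (l' : ℕ) (e' : OpenPartialHomeomorph M (E' × F')),
        HypChart f q l' e' → SpSet f x ν q ⊆ WsLoc f ε q →
        ∃ (O : Set E') (ψ : E' → M), Bornology.IsBounded O ∧ O ∈ nhds (0 : E') ∧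
          ContinuousOn ψ (closure O) ∧
          (∀ v ∈ closure O, ψ v ∈ WsLoc f ε q ∧ ψ v ∈ e.source ∧ ‖(e (ψ v)).2‖ < ρ / 2) ∧
          (∀ v ∈ frontier O, ‖(e (ψ v)).1‖ = ρ) ∧
          (∀ v ∈ closure O, ψ v = q → v = 0) ∧
          ∀ᶠ v in nhds (0 : E'), ψ v = e'.symm (v, 0) := by
  have hev := h.eventually_symm
    ((loc_stable_flat hexp hεα h).and (isOpen_ball.eventually_mem hp))
  obtain ⟨ρ₀, hρ₀, hsub⟩ := Metric.nhds_basis_closedBall.eventually_iff.1 hev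
  refine ⟨ρ₀, hρ₀, fun ρ hρ hρρ => ?_⟩
  have hsub' : ∀ w ∈ closedBall (0 : E × F) ρ, w ∈ e.target ∧
      (e.symm w ∈ WsLoc f ε p → e.symm w ∈ e.source ∧ (e (e.symm w)).2 = 0) ∧
      e.symm w ∈ ball x ν := fun w hw => hsub (closedBall_subset_closedBall hρρ hw)
  have hcb : IsCompact (closedBall (0 : E × F) ρ) := isCompact_closedBall _ _
  have hcont : ContinuousOn e.symm (closedBall (0 : E × F) ρ) :=
    e.continuousOn_symm.mono fun w hw => (hsub' w hw).1
  set B := e.symm '' closedBall (0 : E × F) ρ with hB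
  have hBc : IsCompact B := hcb.image_of_continuousOn hcont
  set B' := e.symm '' (closedBall (0 : E × F) ρ ∩ {w | ρ / 2 ≤ ‖w.2‖}) with hB'
  have hB'c : IsCompact B' := by
    refine IsCompact.image_of_continuousOn ?_ (hcont.mono inter_subset_left)
    exact hcb.inter_right (isClosed_le continuous_const (by fun_prop))
  set Z : Set M := Prod.fst '' ({w : M × M | w.2 ∈ WsLoc f ε w.1} ∩ univ ×ˢ B') with hZ
  have hZc : IsClosed Z := by
    refine IsCompact.isClosed (IsCompact.image ?_ continuous_fst)
    exact (isCompact_univ.prod hB'c).inter_left (isClosed_WsRel f ε)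
  have hpZ : p ∉ Z := by
    rintro ⟨⟨p', z⟩, ⟨hw1, _, hw2⟩, rfl⟩
    obtain ⟨w, ⟨hw3, hw4⟩, rfl⟩ := hw2
    have h1 := hsub' w hw3
    have h2 := (h1.2.1 hw1).2
    rw [e.right_inv h1.1] at h2
    simp only [mem_ofPred_eq, h2, norm_zero] at hw4
    linarith
  set Bo := e.source ∩ e ⁻¹' ball 0 ρ with hBo
  have hBoo : IsOpen Bo := e.isOpen_inter_preimage isOpen_ball
  have hBoB : Bo ⊆ B := by
    rintro z ⟨hz1, hz2⟩
    exact ⟨e z, ball_subset_closedBall hz2, e.left_inv hz1⟩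
  have hBν : B ⊆ ball x ν := by
    rintro _ ⟨w, hw, rfl⟩
    exact (hsub' w hw).2.2
  refine ⟨Zᶜ ∩ Bo, Filter.inter_mem (hZc.isOpen_compl.mem_nhds hpZ) (hBoo.mem_nhds ⟨h.mem, ?_⟩),
    fun z hz => hz.2.1, ?_⟩
  · rw [mem_preimage, h.zero]
    exact mem_ball_self hρ
  intro q hq E' F' _ _ _ _ l' e' h' hSp
  obtain ⟨R, hR, ψ, hψc, hψi, hψW, hψL, hψ0⟩ := param hexp hεα h'
  have hψq : ψ 0 = q := by rw [hψ0.self_of_nhds]; exact h'.symm_zero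
  set D : Set E' := ball 0 R ∩ ψ ⁻¹' Bo with hD
  have hDo : IsOpen D := hψc.isOpen_inter_preimage isOpen_ball hBoo
  have h0D : (0 : E') ∈ D := ⟨mem_ball_self hR, by rw [mem_preimage, hψq]; exact hq.2⟩
  set O := connectedComponentIn D 0 with hO
  have hOD : O ⊆ D := connectedComponentIn_subset _ _
  have hOo : IsOpen O := hDo.connectedComponentIn
  have h0O : (0 : E') ∈ O := mem_connectedComponentIn h0D
  have hOR : O ⊆ ball 0 R := fun v hv => (hOD hv).1
  have himg : ψ '' O ⊆ WsLoc f ε q := by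
    refine Subset.trans ?_ hSp
    refine IsPreconnected.subset_connectedComponentIn
      (isPreconnected_connectedComponentIn.image ψ (hψc.mono hOR)) ⟨0, h0O, hψq⟩ ?_
    rintro _ ⟨v, hv, rfl⟩
    exact ⟨hψW v (hOR hv), hBν (hBoB (hOD hv).2)⟩
  have hO2 : O ⊆ ball 0 (R / 2) := by
    intro v hv
    obtain ⟨w, hw, hwv⟩ := hψL _ (himg ⟨v, hv, rfl⟩)
    rwa [← hψi (ball_subset_ball (by linarith) hw) (hOR hv) hwv]
  have hclR : closure O ⊆ ball 0 R :=
    (closure_mono hO2).trans (closure_ball_subset_closedBall.trans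
      (closedBall_subset_ball (by linarith)))
  have hψcl : ContinuousOn ψ (closure O) := hψc.mono hclR
  have hcl1 : ∀ v ∈ closure O, ψ v ∈ WsLoc f ε q := by
    intro v hv
    have := hψcl.image_closure ⟨v, hv, rfl⟩
    exact closure_minimal himg (isClosed_WsLoc f ε q) this
  have hcl2 : ∀ v ∈ closure O, ψ v ∈ B := by
    intro v hv
    have := hψcl.image_closure ⟨v, hv, rfl⟩
    refine closure_minimal ?_ hBc.isClosed this
    rintro _ ⟨w, hw, rfl⟩
    exact hBoB (hOD hw).2
  have hcl3 : ∀ v ∈ closure O, ψ v ∈ e.source ∧ ‖e (ψ v)‖ ≤ ρ ∧ ‖(e (ψ v)).2‖ < ρ / 2 := by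
    intro v hv
    obtain ⟨w, hw, hwv⟩ := hcl2 v hv
    have h1 := (hsub' w hw).1
    have h2 : e (ψ v) = w := by rw [← hwv, e.right_inv h1]
    refine ⟨by rw [← hwv]; exact e.map_target h1, by rw [h2]; simpa using hw, ?_⟩
    rw [h2]
    by_contra hlt
    exact hq.1 ⟨(q, ψ v), ⟨hcl1 v hv, mem_univ _, w, ⟨hw, not_lt.1 hlt⟩, hwv⟩, rfl⟩
  refine ⟨O, ψ, isBounded_ball.subset hO2, hOo.mem_nhds h0O, hψcl,
    fun v hv => ⟨hcl1 v hv, (hcl3 v hv).1, (hcl3 v hv).2.2⟩, ?_, ?_, hψ0⟩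
  · intro v hv
    have hvc := frontier_subset_closure hv
    obtain ⟨h1, h2, h3⟩ := hcl3 v hvc
    have h4 : ρ ≤ ‖e (ψ v)‖ := by
      by_contra hlt
      have hvD : v ∈ D := ⟨hclR hvc, h1, by simpa using not_le.1 hlt⟩
      have hvO : v ∈ O := by
        have hpre : IsPreconnected (insert v O) :=
          isPreconnected_connectedComponentIn.subset_closure (subset_insert v O)
            (insert_subset hvc subset_closure)
        exact hpre.subset_connectedComponentIn (mem_insert_of_mem _ h0O)
          (insert_subset hvD hOD) (mem_insert _ _)
      rw [hOo.frontier_eq] at hv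
      exact hv.2 hvO
    have h5 : ‖e (ψ v)‖ = ρ := le_antisymm h2 h4
    rw [Prod.norm_def] at h5
    rcases max_choice ‖(e (ψ v)).1‖ ‖(e (ψ v)).2‖ with h6 | h6
    · rw [← h6, h5]
    · rw [h6] at h5
      linarith
  · intro v hv hvq
    exact hψi (hclR hv) (mem_ball_self hR) (by rw [hvq, hψq])

end Dyn2

section Dyn3
variable {M : Type*} [MetricSpace M]

theorem mem_PerH {f : M ≃ₜ M} {n r : ℕ} (hr : r ≤ n) {p : M} (h : p ∈ PerHr f n r) :
    p ∈ PerH f n := by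
  rw [PerH]
  simp only [mem_iUnion]
  exact ⟨r, Finset.mem_range.2 (by omega), h⟩

theorem key_index [CompactSpace M] {n : ℕ} {f : M ≃ₜ M} {α ε ν : ℝ} {x : M}
    (hexp : IsExpansive f α) (hεα : ε < α)
    (hi : ∀ p ∈ PerH f n ∩ Metric.ball x ν,
      SpSet f x ν p ⊆ WsLoc f ε p ∧ UpSet f x ν p ⊆ WuLoc f ε p)
    {r : ℕ} (hr : r ≤ n) {p : M} (hp : p ∈ PerHr f n r) (hpν : p ∈ ball x ν) :
    ∃ N ∈ nhds p, ∀ s ≤ n, ∀ q ∈ N, q ∈ PerHr f n s → s = r := by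
  obtain ⟨l, e, he⟩ := PerHr_iff.1 hp
  obtain ⟨ρ₁, hρ₁, H₁⟩ := stable_side hexp hεα he hpν
  obtain ⟨ρ₂, hρ₂, H₂⟩ := stable_side hexp.symm hεα he.swap hpν
  set ρ := min ρ₁ ρ₂ with hρdef
  have hρ : 0 < ρ := lt_min hρ₁ hρ₂
  obtain ⟨N₁, hN₁, hN₁s, K₁⟩ := H₁ ρ hρ (min_le_left _ _)
  obtain ⟨N₂, hN₂, hN₂s, K₂⟩ := H₂ ρ hρ (min_le_right _ _)
  refine ⟨N₁ ∩ N₂ ∩ ball x ν, Filter.inter_mem (Filter.inter_mem hN₁ hN₂)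
    (isOpen_ball.mem_nhds hpν), ?_⟩
  intro s hs q hq hqs
  obtain ⟨hSq, hUq⟩ := hi q ⟨mem_PerH hs hqs, hq.2⟩
  obtain ⟨l', e', he'⟩ := PerHr_iff.1 hqs
  obtain ⟨O', ψ, hO'b, hO'0, hψc, hψ1, hψ2, hψ3, hψ4⟩ := K₁ q hq.1.1 l' e' he' hSq
  obtain ⟨O, φ, hOb, hO0, hφc, hφ1, hφ2, hφ3, hφ4⟩ := K₂ q hq.1.2 l' _ he'.swap
    (by rw [SpSet_symm, WsLoc_symm]; exact hUq)
  have hqsrc : q ∈ e.source := hN₁s hq.1.1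
  have hmain := tl_main (e'.symm.trans e) (by
      simp only [OpenPartialHomeomorph.trans_source, OpenPartialHomeomorph.symm_source, mem_inter_iff,
        mem_preimage]
      exact ⟨he'.zero_mem, by rw [he'.symm_zero]; exact hqsrc⟩)
    O O' hOb hO'b hO0 hO'0 (fun u => e (φ u)) (fun v => e (ψ v))
    (e.continuousOn.comp hφc fun u hu => (hφ1 u hu).2.1)
    (e.continuousOn.comp hψc fun v hv => (hψ1 v hv).2.1) ρ hρ
    (fun u hu => (hφ1 u hu).2.2) (fun u hu => hφ2 u hu)
    (fun v hv => (hψ1 v hv).2.2) (fun v hv => hψ2 v hv) (by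
      intro u hu v hv huv
      have h1 := e.injOn (hφ1 u hu).2.1 (hψ1 v hv).2.1 huv
      have h2 := (hφ1 u hu).1
      rw [WsLoc_symm] at h2
      have h3 : φ u ∈ WsLoc f ε q := by rw [h1]; exact (hψ1 v hv).1
      have h4 := eq_of_WsLoc_WuLoc hexp hεα h3 h2
      exact ⟨hφ3 u hu h4, hψ3 v hv (by rw [← h1, h4])⟩)
    (by
      filter_upwards [hφ4] with u hu
      rw [hu]
      rfl)
    (by
      filter_upwards [hψ4] with v hv
      rw [hv]
      rfl)
  simp only [Module.finrank_fin_fun] at hmain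
  omega

/-- index is locally constant around the local stable set -/
theorem index_nhds [CompactSpace M] {n : ℕ} {f : M ≃ₜ M} {α ε ν : ℝ} {x : M}
    (hexp : IsExpansive f α) (hεα : ε < α)
    (hi : ∀ p ∈ PerH f n ∩ Metric.ball x ν,
      SpSet f x ν p ⊆ WsLoc f ε p ∧ UpSet f x ν p ⊆ WuLoc f ε p)
    {r : ℕ} (hr : r ≤ n) {p : M} (hp : p ∈ PerHr f n r) (hpν : p ∈ ball x ν) :
    ∃ V : Set M, IsOpen V ∧ SpSet f x ν p ⊆ V ∧ PerH f n ∩ V ⊆ PerHr f n r := by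
  obtain ⟨N, hN, hNs⟩ := key_index hexp hεα hi hr hp hpν
  obtain ⟨N', hN'N, hN'o, hpN'⟩ := _root_.mem_nhds_iff.1 hN
  obtain ⟨l, e, he⟩ := PerHr_iff.1 hp
  refine ⟨⋃ k : ℕ, iterZ f (l * k : ℤ) ⁻¹' N', isOpen_iUnion fun k =>
    hN'o.preimage (iterZ_continuous f _), ?_, ?_⟩
  · intro y hy
    have hyW : y ∈ Ws f p := (connectedComponentIn_subset _ _ hy).1
    have := (tendsto_of_mem_Ws he.one_le he.per hyW).eventually (hN'o.eventually_mem hpN')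
    obtain ⟨k, hk⟩ := this.exists
    exact mem_iUnion.2 ⟨k, hk⟩
  · rintro q ⟨hq, hqV⟩
    obtain ⟨k, hk⟩ := mem_iUnion.1 hqV
    rw [PerH] at hq
    simp only [mem_iUnion] at hq
    obtain ⟨s, hs, hqs⟩ := hq
    have hs' : s ≤ n := by
      have := Finset.mem_range.1 hs
      omega
    have := hNs s hs' _ (hN'N hk) (PerHr_iter hqs _)
    rwa [← this]
end Dyn3

section Chains
variable {M : Type*} [MetricSpace M]

theorem exists_maxChain {f : M ≃ₜ M} {n : ℕ} {x : M} {ν δ : ℝ} {C₀ : Set M}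
    (h : IsChainIn f n x ν δ C₀) : ∃ C, IsMaxChainIn f n x ν δ C ∧ C₀ ⊆ C := by
  obtain ⟨m, hm, hmax⟩ := zorn_subset_nonempty {C : Set M | IsChainIn f n x ν δ C} (by
    intro c hc hchain _
    refine ⟨⋃₀ c, ⟨sUnion_subset fun s hs => (hc hs).1, ?_⟩, fun s hs => subset_sUnion_of_mem hs⟩
    rintro a ⟨s, hs, has⟩ b ⟨t, ht, hbt⟩
    rcases hchain.total hs ht with hst | hst
    · exact (hc ht).2 a (hst has) b hbt
    · exact (hc hs).2 a has b (hst hbt)) C₀ h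
  exact ⟨m, ⟨hmax.1, fun C' hC' hsub => (hmax.2 hC' hsub).antisymm hsub⟩, hm⟩

theorem mem_of_comparable {f : M ≃ₜ M} {n : ℕ} {x : M} {ν δ : ℝ}
    (hdisj : ∀ C₁ C₂ : Set M, IsMaxChainIn f n x ν δ C₁ → IsMaxChainIn f n x ν δ C₂ →
      C₁ ≠ C₂ → Disjoint C₁ C₂) {C : Set M} (hC : IsMaxChainIn f n x ν δ C) {c q : M}
    (hc : c ∈ C) (hq : q ∈ Xdelta f n x δ) (h : ShatSet f x ν q ⊆ ShatSet f x ν c) : q ∈ C := by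
  have hch : IsChainIn f n x ν δ {c, q} := by
    refine ⟨?_, ?_⟩
    · rintro a (rfl | rfl)
      · exact hC.1.1 hc
      · exact hq
    · rintro a (rfl | rfl) b (rfl | rfl)
      · exact Or.inl Subset.rfl
      · exact Or.inr h
      · exact Or.inl h
      · exact Or.inl Subset.rfl
  obtain ⟨C', hC', hsub⟩ := exists_maxChain hch
  have : C = C' := by
    by_contra hne
    exact Set.disjoint_left.1 (hdisj C C' hC hC' hne) hc (hsub (by simp))
  rw [this]
  exact hsub (by simp)

theorem isOpen_ball_diff_SpSet [CompactSpace M] {f : M ≃ₜ M} {α ε ν : ℝ} {x p : M}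
    (hexp : IsExpansive f α) (hεα : ε < α) (h : SpSet f x ν p ⊆ WsLoc f ε p)
    (hp : p ∈ SpSet f x ν p) :
    IsOpen (ball x ν \ SpSet f x ν p) := by
  have : ball x ν \ SpSet f x ν p = ball x ν \ closure (SpSet f x ν p) := by
    ext y
    refine ⟨fun hy => ⟨hy.1, fun hcl => hy.2 ?_⟩, fun hy => ⟨hy.1, fun h' => hy.2 (subset_closure h')⟩⟩
    have hyW : y ∈ Ws f p := WsLoc_subset_Ws hexp hεα p
      (closure_minimal h (isClosed_WsLoc f ε p) hcl)
    have hpre : IsPreconnected (insert y (SpSet f x ν p)) :=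
      isPreconnected_connectedComponentIn.subset_closure (subset_insert y _)
        (insert_subset hcl subset_closure)
    have hsub : insert y (SpSet f x ν p) ⊆ Ws f p ∩ ball x ν :=
      insert_subset ⟨hyW, hy.1⟩ (connectedComponentIn_subset _ _)
    exact hpre.subset_connectedComponentIn (F := Ws f p ∩ ball x ν)
      (mem_insert_of_mem _ hp) hsub (mem_insert _ _)
  rw [this]
  exact isOpen_ball.sdiff isClosed_closure

end Chains

theorem stmt13
    {M : Type*} [MetricSpace M] [CompactSpace M] [ConnectedSpace M]
    (n : ℕ) [ChartedSpace (EuclideanSpace ℝ (Fin n)) M]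
    (f : M ≃ₜ M) (α : ℝ) (hα : 0 < α) (hexp : IsExpansive f α)
    (x : M) (hx : ¬ AdmitsLPS f n x)
    (ε : ℝ) (hε : 0 < ε) (hεα : 2 * ε < α) (ν : ℝ) (hν : 0 < ν)
    (hi : ∀ p ∈ PerH f n ∩ Metric.ball x ν,
      SpSet f x ν p ⊆ WsLoc f ε p ∧ UpSet f x ν p ⊆ WuLoc f ε p)
    (hii : ∀ p ∈ PerHr f n (n - 1) ∩ Metric.ball x ν,
      ∃ V₁ V₂ : Set M, TwoComponents (Metric.ball x ν \ SpSet f x ν p) V₁ V₂)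
    (hdense : closure (PerH f n) = Set.univ)
    (δ : ℝ) (hδ : δ ∈ Set.Ioo (0 : ℝ) ν)
    (hfin : {C : Set M | IsMaxChainIn f n x ν δ C}.Finite)
    (hdisj : ∀ C₁ C₂ : Set M, IsMaxChainIn f n x ν δ C₁ → IsMaxChainIn f n x ν δ C₂ →
      C₁ ≠ C₂ → Disjoint C₁ C₂)
    (hacc : ∀ C : Set M, IsMaxChainIn f n x ν δ C → x ∈ closure C)
    :
    ∀ p ∈ PerHr f n (n - 1) ∩ Metric.ball x δ,
      ∃ V : Set M, IsOpen V ∧ SpSet f x ν p ⊆ V ∧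
        ∀ C : Set M, IsMaxChainIn f n x ν δ C → p ∈ C →
          PerH f n ∩ V ∩ Metric.ball x δ ⊆ C := by
  intro p hp
  have hεα' : ε < α := by linarith
  have hδν : ball x δ ⊆ ball x ν := ball_subset_ball hδ.2.le
  haveI : LocallyConnectedSpace M :=
    ChartedSpace.locallyConnectedSpace (EuclideanSpace ℝ (Fin n)) M
  by_cases hex : ∃ C : Set M, IsMaxChainIn f n x ν δ C ∧ p ∈ C
  swap
  · exact ⟨univ, isOpen_univ, subset_univ _, fun C hC hpC => (hex ⟨C, hC, hpC⟩).elim⟩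
  obtain ⟨C, hC, hpC⟩ := hex
  have huniq : ∀ C' : Set M, IsMaxChainIn f n x ν δ C' → p ∈ C' → C' = C := by
    intro C' hC' hpC'
    by_contra hne
    exact Set.disjoint_left.1 (hdisj C' C hC' hC hne) hpC' hpC
  obtain ⟨V₁, hV₁o, hV₁S, hV₁⟩ := index_nhds hexp hεα' hi (Nat.sub_le n 1) hp.1 (hδν hp.2)
  -- basic facts on the sets `S_c`
  have hself : ∀ c ∈ Xdelta f n x δ, c ∈ SpSet f x ν c := fun c hc =>
    mem_connectedComponentIn ⟨mem_Ws_self f c, hδν hc.2⟩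
  have hball : ∀ c, SpSet f x ν c ⊆ ball x ν := fun c y hy =>
    (connectedComponentIn_subset _ _ hy).2
  have hopen : ∀ c ∈ Xdelta f n x δ, IsOpen (ball x ν \ SpSet f x ν c) := fun c hc =>
    isOpen_ball_diff_SpSet hexp hεα' (hi c ⟨mem_PerH (Nat.sub_le n 1) hc.1, hδν hc.2⟩).1 (hself c hc)
  have hdis : ∀ c ∈ Xdelta f n x δ, ∀ q ∈ Xdelta f n x δ, c ≠ q →
      Disjoint (SpSet f x ν c) (SpSet f x ν q) := by
    intro c hc q hq hne
    rw [Set.disjoint_left]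
    intro z hz hz'
    obtain ⟨l, e, he⟩ := PerHr_iff.1 hc.1
    obtain ⟨m, e', he'⟩ := PerHr_iff.1 hq.1
    exact hne (Ws_disjoint he.one_le he'.one_le he.per he'.per
      (connectedComponentIn_subset _ _ hz).1 (connectedComponentIn_subset _ _ hz').1)
  suffices hV : ∃ V₂ : Set M, IsOpen V₂ ∧ SpSet f x ν p ⊆ V₂ ∧ ∀ q ∈ Xdelta f n x δ, q ∈ V₂ →
      q ∈ C by
    obtain ⟨V₂, h1, h2, h3⟩ := hV
    refine ⟨V₁ ∩ V₂, hV₁o.inter h1, subset_inter hV₁S h2, fun C' hC' hpC' => ?_⟩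
    rw [huniq C' hC' hpC']
    rintro q ⟨⟨hq1, hq2⟩, hq3⟩
    exact h3 q ⟨hV₁ ⟨hq1, hq2.1⟩, hq3⟩ hq2.2
  by_cases hcase : ∃ c ∈ C, x ∈ SpSet f x ν c
  · obtain ⟨c, hcC, hxc⟩ := hcase
    refine ⟨univ, isOpen_univ, subset_univ _, fun q hq _ => mem_of_comparable hdisj hC hcC hq ?_⟩
    have : ShatSet f x ν c = ball x ν := by
      rw [ShatSet, connectedComponentIn_eq_empty (fun h => h.2 hxc), sdiff_empty]
    rw [this]
    exact sdiff_subset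
  · have hxS : ∀ c ∈ C, x ∈ ball x ν \ SpSet f x ν c := fun c hc =>
      ⟨mem_ball_self hν, fun h => hcase ⟨c, hc, h⟩⟩
    have hpX := hC.1.1 hpC
    -- a point of the chain close to `x`
    obtain ⟨c, hcA, hcC⟩ := mem_closure_iff.1 (hacc C hC) _ (hopen p hpX).connectedComponentIn
      (mem_connectedComponentIn (hxS p hpC))
    have hcX := hC.1.1 hcC
    have hle : ShatSet f x ν p ⊆ ShatSet f x ν c := by
      rcases hC.1.2 p hpC c hcC with h | h
      · exact h
      · exfalso
        have hc1 : c ∈ ShatSet f x ν c := ⟨hδν hcX.2, fun hh =>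
          (connectedComponentIn_subset _ _ hh).2 (hself c hcX)⟩
        exact (h hc1).2 hcA
    have hcp : p ≠ c := by
      rintro rfl
      exact (connectedComponentIn_subset _ _ hcA).2 (hself p hpX)
    set A := connectedComponentIn (ball x ν \ SpSet f x ν c) x with hA
    refine ⟨(ball x ν \ SpSet f x ν c) \ A, ?_, ?_, ?_⟩
    · rw [isOpen_iff_forall_mem_open]
      intro y hy
      refine ⟨connectedComponentIn (ball x ν \ SpSet f x ν c) y, ?_,
        (hopen c hcX).connectedComponentIn, mem_connectedComponentIn hy.1⟩
      intro z hz
      refine ⟨connectedComponentIn_subset _ _ hz, fun hzA => hy.2 ?_⟩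
      rw [hA, connectedComponentIn_eq hzA, ← connectedComponentIn_eq hz]
      exact mem_connectedComponentIn hy.1
    · intro y hy
      refine ⟨⟨hball p hy, fun hy' => Set.disjoint_left.1 (hdis p hpX c hcX hcp) hy hy'⟩, ?_⟩
      have hyp : y ∈ ShatSet f x ν p := ⟨hball p hy, fun hh =>
        (connectedComponentIn_subset _ _ hh).2 hy⟩
      exact (hle hyp).2
    · intro q hq hqD
      have hqc : q ≠ c := by
        rintro rfl
        exact hqD.1.2 (hself q hq)
      have hSq : SpSet f x ν q ⊆ ball x ν \ SpSet f x ν c := fun y hy =>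
        ⟨hball q hy, fun hy' => Set.disjoint_left.1 (hdis q hq c hcX hqc) hy hy'⟩
      refine mem_of_comparable hdisj hC hcC hq (sdiff_subset_sdiff_right ?_)
      refine isPreconnected_connectedComponentIn.subset_connectedComponentIn
        (mem_connectedComponentIn (hxS c hcC)) ?_
      intro z hz
      refine ⟨(connectedComponentIn_subset _ _ hz).1, fun hzq => hqD.2 ?_⟩
      rw [hA, connectedComponentIn_eq hz]
      exact isPreconnected_connectedComponentIn.subset_connectedComponentIn hzq hSq (hself q hq)
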